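/- Fix an integer r ≥ 1 and constants K ≥ 1, C > 0. There exists a constant c > 0 depending only on r, C and K such that the following holds: for every n ∈ ℕ, every choice of integer sample sizes n_1 < n_2 < … < n_r with n/K ≤ n_1 and n_r ≤ n whose jackknife coefficients C_i = ∏_{j≠i} n_i/(n_i − n_j) satisfy Σ_{i=1}^r |C_i| ≤ C, and every continuous function f : [0,1] → ℝ, one has sup_{p∈[0,1]} |Σ_{i=1}^r C_i B_{n_i}[f](p) − f(p)| ≤ c ( ω_φ^{2r}(f, 1/√n) + n^{−r} ‖f‖ ). -/

import Mathlib

/-- Bernstein operator: `B_m[g](p) = Σ_{k=0}^m C(m,k) p^k (1-p)^{m-k} g(k/m)`. -/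
noncomputable def bernstein' (m : ℕ) (g : ℝ → ℝ) (p : ℝ) : ℝ :=
  ∑ k ∈ Finset.range (m + 1), (m.choose k : ℝ) * p ^ k * (1 - p) ^ (m - k) * g ((k : ℝ) / m)

/-- `r`-th symmetric difference of `g` with step `h`, vanishing near the boundary of `[0,1]`. -/
noncomputable def ditzSymmDiff (r : ℕ) (h : ℝ) (g : ℝ → ℝ) (x : ℝ) : ℝ :=
  if x - r * h / 2 ∈ Set.Icc (0:ℝ) 1 ∧ x + r * h / 2 ∈ Set.Icc (0:ℝ) 1 then
    ∑ k ∈ Finset.range (r + 1), (-1 : ℝ) ^ k * (r.choose k : ℝ) * g (x + r * h / 2 - k * h)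
  else 0

/-- `r`-th Ditzian–Totik modulus of smoothness with weight `φ(x) = √(x(1-x))`. -/
noncomputable def dtMod (r : ℕ) (g : ℝ → ℝ) (t : ℝ) : ℝ :=
  sSup {y : ℝ | ∃ h x : ℝ, 0 < h ∧ h ≤ t ∧ x ∈ Set.Icc (0:ℝ) 1 ∧
    y = |ditzSymmDiff r (h * Real.sqrt (x * (1 - x))) g x|}

/-- Sup norm on `[0,1]`. -/
noncomputable def supAbsOn (g : ℝ → ℝ) : ℝ := sSup ((fun p => |g p|) '' Set.Icc (0:ℝ) 1)

/-- Jackknife coefficients `C_i = ∏_{j≠i} n_i/(n_i - n_j)`. -/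
noncomputable def jackCoeff {r : ℕ} (ns : Fin r → ℕ) (i : Fin r) : ℝ :=
  ∏ j ∈ Finset.univ.erase i, (ns i : ℝ) / ((ns i : ℝ) - (ns j : ℝ))

/-- Sup over `p ∈ [0,1]` of the `r`-jackknife bias `|Σ_i C_i B_{n_i}[f](p) - f(p)|`. -/
noncomputable def jackBias {r : ℕ} (ns : Fin r → ℕ) (f : ℝ → ℝ) : ℝ :=
  sSup ((fun p => |(∑ i, jackCoeff ns i * bernstein' (ns i) f p) - f p|) '' Set.Icc (0:ℝ) 1)

/-- The average of `g` over `[x, x + δ]`. -/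
noncomputable def stepMean (δ : ℝ) (g : ℝ → ℝ) (x : ℝ) : ℝ := ∫ u in (0:ℝ)..1, g (x + δ * u)

theorem continuous_stepMean {g : ℝ → ℝ} (hg : Continuous g) (δ : ℝ) :
    Continuous (stepMean δ g) := by
  unfold stepMean
  apply intervalIntegral.continuous_parametric_intervalIntegral_of_continuous'
  simp only [Function.uncurry_def]
  fun_prop

theorem continuous_stepMean_iterate {g : ℝ → ℝ} (hg : Continuous g) (δ : ℝ) (k : ℕ) :
    Continuous ((stepMean δ)^[k] g) := by
  induction k with
  | zero => exact hg
  | succ k ih => rw [Function.iterate_succ_apply']; exact continuous_stepMean ih δ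

theorem hasDerivAt_stepMean {g : ℝ → ℝ} (hg : Continuous g) {δ : ℝ} (hδ : δ ≠ 0) (x : ℝ) :
    HasDerivAt (stepMean δ g) (δ⁻¹ * fwdDiff δ g x) x := by
  have hrep : stepMean δ g = fun y => δ⁻¹ * ((∫ u in (0:ℝ)..(y + δ), g u) - ∫ u in (0:ℝ)..y, g u) := by
    funext y
    rw [stepMean, intervalIntegral.integral_comp_add_mul _ hδ,
      intervalIntegral.integral_interval_sub_left (hg.intervalIntegrable _ _)
        (hg.intervalIntegrable _ _)]
    simp
  rw [hrep]
  have h1 : ∀ y, HasDerivAt (fun y => ∫ u in (0:ℝ)..y, g u) (g y) y := fun y =>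
    hg.integral_hasStrictDerivAt 0 y |>.hasDerivAt
  exact (((h1 (x + δ)).comp_add_const x δ).sub (h1 x)).const_mul _

theorem contDiff_stepMean_iterate {g : ℝ → ℝ} (hg : Continuous g) {δ : ℝ} (hδ : δ ≠ 0) (k : ℕ) :
    ContDiff ℝ k ((stepMean δ)^[k] g) := by
  induction k with
  | zero => simpa [contDiff_zero] using hg
  | succ k ih =>
    rw [Function.iterate_succ_apply']
    have hd := hasDerivAt_stepMean (continuous_stepMean_iterate hg δ k) hδ
    have hderiv := funext fun x => (hd x).deriv
    push_cast
    refine contDiff_succ_iff_deriv.2 ⟨fun x => (hd x).differentiableAt, by simp, ?_⟩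
    rw [hderiv]
    unfold fwdDiff
    exact contDiff_const.mul ((ih.comp (contDiff_id.add contDiff_const)).sub ih)

theorem iteratedDeriv_stepMean_iterate {g : ℝ → ℝ} (hg : Continuous g) {δ : ℝ} (hδ : δ ≠ 0)
    (k : ℕ) (x : ℝ) :
    iteratedDeriv k ((stepMean δ)^[k] g) x = (δ⁻¹) ^ k * (fwdDiff δ)^[k] g x := by
  induction k generalizing x with
  | zero => simp
  | succ k ih =>
    have hd := hasDerivAt_stepMean (continuous_stepMean_iterate hg δ k) hδ
    have hc := contDiff_stepMean_iterate hg hδ k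
    rw [iteratedDeriv_succ', Function.iterate_succ_apply', Function.iterate_succ_apply',
      funext fun x => (hd x).deriv, iteratedDeriv_const_mul_field]
    have hshift : ContDiff ℝ k fun y => (stepMean δ)^[k] g (y + δ) :=
      hc.comp (contDiff_id.add contDiff_const)
    have hsub : iteratedDeriv k (fwdDiff δ ((stepMean δ)^[k] g)) x =
        (δ⁻¹) ^ k * (fwdDiff δ)^[k] g (x + δ) - (δ⁻¹) ^ k * (fwdDiff δ)^[k] g x := by
      unfold fwdDiff
      rw [iteratedDeriv_fun_sub hshift.contDiffAt hc.contDiffAt, iteratedDeriv_comp_add_const]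
      exact congrArg₂ _ (ih _) (ih _)
    rw [hsub, fwdDiff]
    ring

theorem stepMean_iterate_scale (g : ℝ → ℝ) (δ x : ℝ) (j k : ℕ) (w : ℝ) :
    (stepMean (j * δ))^[k] g (x + j * w) = (stepMean δ)^[k] (fun v => g (x + j * v)) w := by
  induction k generalizing w with
  | zero => rfl
  | succ k ih =>
    rw [Function.iterate_succ_apply', Function.iterate_succ_apply']
    change (∫ u in (0:ℝ)..1, (stepMean (j * δ))^[k] g (x + j * w + j * δ * u)) =
      ∫ u in (0:ℝ)..1, (stepMean δ)^[k] (fun v => g (x + j * v)) (w + δ * u)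
    simp only [← ih]
    ring_nf

theorem stepMean_iterate_sum {ι : Type*} (s : Finset ι) (c : ι → ℝ) (H : ι → ℝ → ℝ)
    (hH : ∀ i, Continuous (H i)) (δ : ℝ) (k : ℕ) (w : ℝ) :
    (stepMean δ)^[k] (fun v => ∑ i ∈ s, c i * H i v) w =
      ∑ i ∈ s, c i * (stepMean δ)^[k] (H i) w := by
  induction k generalizing w with
  | zero => rfl
  | succ k ih =>
    simp only [Function.iterate_succ_apply']
    have hc := fun i => continuous_stepMean_iterate (hH i) δ k

    rw [funext ih, stepMean, intervalIntegral.integral_finsetSum]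
    · simp only [intervalIntegral.integral_const_mul]
      rfl
    · intro i _
      have := hc i
      exact Continuous.intervalIntegrable (by fun_prop) _ _

theorem abs_stepMean_iterate_le {H : ℝ → ℝ} {δ M : ℝ} (hδ : 0 ≤ δ) (k : ℕ) (w : ℝ)
    (hM : ∀ v, w ≤ v → v ≤ w + k * δ → |H v| ≤ M) :
    |(stepMean δ)^[k] H w| ≤ M := by
  induction k generalizing w with
  | zero => exact hM w le_rfl (by simp)
  | succ k ih =>
    rw [Function.iterate_succ_apply']
    have := intervalIntegral.norm_integral_le_of_norm_le_const (a := (0:ℝ)) (b := 1) (C := M)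
      (f := fun u => (stepMean δ)^[k] H (w + δ * u)) fun u hu => by
        rw [Set.uIoc_of_le zero_le_one] at hu
        refine ih _ fun v h1 h2 => hM v ?_ ?_
        · nlinarith [hu.1]
        · push_cast
          nlinarith [hu.2, mul_le_mul_of_nonneg_left hu.2 hδ]
    simpa [stepMean] using this

/-- Steklov smoothing: a `C^k` function whose distance to `f` and whose `k`-th derivative are
controlled, pointwise, by the `k`-th forward differences of `f` with steps at most `η`. -/
theorem exists_steklov {k : ℕ} (hk : 1 ≤ k) : ∃ c : ℝ, 1 ≤ c ∧ ∀ f : ℝ → ℝ, Continuous f →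
    ∀ η : ℝ, 0 < η → ∃ F : ℝ → ℝ, ContDiff ℝ k F ∧ ∀ x M : ℝ,
      (∀ v, 0 < v → v ≤ η → |(fwdDiff v)^[k] f x| ≤ M) →
        |f x - F x| ≤ M ∧ |iteratedDeriv k F x| ≤ c * M / η ^ k := by
  have hk0 : (0:ℝ) < k := by exact_mod_cast hk
  refine ⟨1 + ∑ j ∈ Finset.range k, (k.choose (j + 1) : ℝ) * k ^ k, ?_, fun f hf η hη => ?_⟩
  · have : 0 ≤ ∑ j ∈ Finset.range k, (k.choose (j + 1) : ℝ) * k ^ k := by positivity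
    linarith
  set δ := η / k with hδdef
  have hδ : 0 < δ := by positivity
  set F : ℝ → ℝ := fun x => -((-1) ^ k * ∑ j ∈ Finset.range k,
    ((-1) ^ (k - (j + 1)) * (k.choose (j + 1) : ℝ)) * (stepMean ((j + 1 : ℕ) * δ))^[k] f x) with hF
  have hjδ : ∀ j : ℕ, ((j + 1 : ℕ) : ℝ) * δ ≠ 0 := fun j => by positivity
  have hcd : ∀ j : ℕ, ContDiff ℝ k ((stepMean ((j + 1 : ℕ) * δ))^[k] f) := fun j =>
    contDiff_stepMean_iterate hf (hjδ j) k
  refine ⟨F, ?_, fun x M hM => ⟨?_, ?_⟩⟩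
  · exact (contDiff_const.mul (ContDiff.sum fun j _ => contDiff_const.mul (hcd j))).neg
  · have hM0 : 0 ≤ M := (abs_nonneg _).trans (hM η hη le_rfl)
    have hrep : f x - F x = (-1) ^ k * (stepMean δ)^[k] (fun v => (fwdDiff v)^[k] f x) 0 := by
      have h1 : (fun v => (fwdDiff v)^[k] f x) = fun v => ∑ j ∈ Finset.range (k + 1),
          ((-1) ^ (k - j) * (k.choose j : ℝ)) * f (x + j * v) := by
        funext v
        rw [fwdDiff_iter_eq_sum_shift]
        refine Finset.sum_congr rfl fun j _ => ?_
        simp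
      rw [h1, stepMean_iterate_sum _ _ _ (fun j => by fun_prop)]
      simp only [← stepMean_iterate_scale]
      rw [Finset.sum_range_succ', hF]
      have h2 : (stepMean (((0:ℕ):ℝ) * δ))^[k] f (x + ((0:ℕ):ℝ) * 0) = f x := by
        have : stepMean (((0:ℕ):ℝ) * δ) f = f := by funext y; simp [stepMean]
        rw [Function.iterate_fixed this]; simp
      rw [h2]
      have h3 : ((-1:ℝ)) ^ k * (-1) ^ k = 1 := by rw [← mul_pow]; simp
      simp only [mul_zero, add_zero, Nat.sub_zero, Nat.choose_zero_right, Nat.cast_one, mul_one]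
      linear_combination (-f x) * h3
    rw [hrep, abs_mul, abs_pow, abs_neg, abs_one, one_pow, one_mul]
    refine abs_stepMean_iterate_le hδ.le k 0 fun v h1 h2 => ?_
    rcases h1.eq_or_lt with rfl | h1
    · have : (fwdDiff (0:ℝ))^[k] f x = 0 := by
        obtain ⟨k, rfl⟩ := Nat.exists_eq_add_of_le' hk
        rw [Function.iterate_succ_apply']
        simp [fwdDiff]
      simpa [this]
    · exact hM v h1 (h2.trans (by rw [hδdef]; field_simp; simp))
  · have hM0 : 0 ≤ M := (abs_nonneg _).trans (hM η hη le_rfl)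
    have hder : iteratedDeriv k F x = -((-1) ^ k * ∑ j ∈ Finset.range k,
        ((-1) ^ (k - (j + 1)) * (k.choose (j + 1) : ℝ)) *
          ((((j + 1 : ℕ) : ℝ) * δ)⁻¹ ^ k * (fwdDiff (((j + 1 : ℕ) : ℝ) * δ))^[k] f x)) := by
      rw [hF, iteratedDeriv_fun_neg, iteratedDeriv_const_mul_field, iteratedDeriv_fun_sum]
      · simp only [iteratedDeriv_const_mul_field, iteratedDeriv_stepMean_iterate hf (hjδ _)]
      · exact fun j _ => (contDiff_const.mul (hcd j)).contDiffAt
    rw [hder, abs_neg, abs_mul, abs_pow, abs_neg, abs_one, one_pow, one_mul]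
    have hle : ∀ j ∈ Finset.range k, |((-1) ^ (k - (j + 1)) * (k.choose (j + 1) : ℝ)) *
          ((((j + 1 : ℕ) : ℝ) * δ)⁻¹ ^ k * (fwdDiff (((j + 1 : ℕ) : ℝ) * δ))^[k] f x)| ≤
          (k.choose (j + 1) : ℝ) * k ^ k * (M / η ^ k) := by
      intro j hj
      have hjk : ((j + 1 : ℕ) : ℝ) ≤ k := by exact_mod_cast Finset.mem_range.1 hj
      have hj1 : (1 : ℝ) ≤ ((j + 1 : ℕ) : ℝ) := by exact_mod_cast Nat.le_add_left 1 j
      have e1 : |(fwdDiff (((j + 1 : ℕ) : ℝ) * δ))^[k] f x| ≤ M := by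
        refine hM _ (by positivity) ?_
        calc ((j + 1 : ℕ) : ℝ) * δ ≤ k * δ := by gcongr
          _ = η := by rw [hδdef]; field_simp
      have e2 : (((j + 1 : ℕ) : ℝ) * δ)⁻¹ ^ k ≤ k ^ k / η ^ k := by
        rw [← div_pow]
        refine pow_le_pow_left₀ (by positivity) ?_ k
        calc (((j + 1 : ℕ) : ℝ) * δ)⁻¹ ≤ (1 * δ)⁻¹ := by gcongr
          _ = k / η := by rw [hδdef]; field_simp
      rw [abs_mul, abs_mul, abs_pow, abs_neg, abs_one, one_pow, one_mul, Nat.abs_cast, mul_assoc]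
      refine mul_le_mul_of_nonneg_left ?_ (by positivity)
      rw [abs_mul, abs_of_nonneg (by positivity : 0 ≤ (((j + 1 : ℕ) : ℝ) * δ)⁻¹ ^ k)]
      calc _ ≤ k ^ k / η ^ k * M := by gcongr
        _ = _ := by ring
    refine (Finset.abs_sum_le_sum_abs _ _).trans ((Finset.sum_le_sum hle).trans ?_)
    rw [← Finset.sum_mul, mul_div_assoc]
    have : 0 ≤ M / η ^ k := by positivity
    nlinarith

theorem exists_taylor_polynomial {k : ℕ} (hk : 1 ≤ k) {F : ℝ → ℝ} (hF : ContDiff ℝ k F) (q : ℝ) :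
    ∃ P : Polynomial ℝ, P.degree < k ∧ ∀ x M : ℝ,
      (∀ y ∈ Set.uIcc q x, |iteratedDeriv k F y| ≤ M) → |F x - P.eval x| ≤ M * |x - q| ^ k := by
  obtain ⟨m, rfl⟩ := Nat.exists_eq_add_of_le' hk
  refine ⟨∑ i ∈ Finset.range (m + 1), Polynomial.C (((i.factorial : ℝ))⁻¹ * iteratedDeriv i F q) *
    (Polynomial.X - Polynomial.C q) ^ i, ?_, fun x M hM => ?_⟩
  · refine (Polynomial.degree_sum_le _ _).trans_lt ?_
    rw [Finset.sup_lt_iff (by exact WithBot.bot_lt_coe _)]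
    intro i hi
    rw [← Polynomial.smul_eq_C_mul]
    refine (Polynomial.degree_smul_le _ _).trans_lt ?_
    rw [Polynomial.degree_pow, Polynomial.degree_X_sub_C, nsmul_one]
    exact_mod_cast Finset.mem_range.1 hi
  rcases eq_or_ne q x with rfl | hx
  · rw [Finset.sum_range_succ']
    simp [Polynomial.eval_finsetSum]
  obtain ⟨x', hx', h⟩ := taylor_mean_remainder_lagrange_iteratedDeriv (n := m) hx
    (by exact_mod_cast hF.contDiffOn)
  have heq : taylorWithinEval F m (Set.uIcc q x) q x = Polynomial.eval x
      (∑ i ∈ Finset.range (m + 1), Polynomial.C (((i.factorial : ℝ))⁻¹ * iteratedDeriv i F q) *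
    (Polynomial.X - Polynomial.C q) ^ i) := by
    rw [taylor_within_apply, Polynomial.eval_finsetSum]
    refine Finset.sum_congr rfl fun i hi => ?_
    rw [iteratedDerivWithin_eq_iteratedDeriv (uniqueDiffOn_uIcc hx) _ Set.left_mem_uIcc]
    · simp; ring
    · refine (hF.of_le ?_).contDiffAt
      exact_mod_cast (Finset.mem_range.1 hi).le
  rw [← heq, h, abs_div, abs_mul, abs_pow]
  have h1 := hM x' (Set.uIoo_subset_uIcc_self hx')
  have h0 : 0 ≤ M := (abs_nonneg _).trans h1
  have hf : (1:ℝ) ≤ |((m+1).factorial : ℝ)| := by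
    rw [Nat.abs_cast]; exact_mod_cast Nat.one_le_iff_ne_zero.2 (Nat.factorial_ne_zero _)
  refine (div_le_self (by positivity) hf).trans ?_
  gcongr

theorem eval_eq_sum_taylor_coeff {k : ℕ} {P : Polynomial ℝ} (hP : P.natDegree < k) (p x : ℝ) :
    P.eval x = ∑ s ∈ Finset.range k, (Polynomial.taylor p P).coeff s * (x - p) ^ s := by
  rw [← Polynomial.eval_eq_sum_range' (by rwa [Polynomial.natDegree_taylor]), Polynomial.taylor_eval,
    sub_add_cancel]

/-- A polynomial of degree `< k` bounded on `[a, a + L]` has controlled Taylor coefficients at all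
points within distance `2 * L` of `a`. -/
theorem exists_taylor_coeff_bound (k : ℕ) (hk : 1 ≤ k) : ∃ c : ℝ, 1 ≤ c ∧
    ∀ P : Polynomial ℝ, P.natDegree < k → ∀ a L B : ℝ, 0 < L →
      (∀ x, a ≤ x → x ≤ a + L → |P.eval x| ≤ B) → ∀ s < k, ∀ y, |y - a| ≤ 2 * L →
        |(Polynomial.taylor y P).coeff s| * L ^ s ≤ c * B := by
  have hk0 : (0:ℝ) < k := by exact_mod_cast hk
  set v : ℕ → ℝ := fun i => i / k with hv
  set l : ℕ → Polynomial ℝ := fun i => Lagrange.basis (Finset.range k) v i with hl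
  have hbd : ∀ i s : ℕ, ∃ M : ℝ, ∀ z ∈ Set.Icc (-2:ℝ) 2, |(Polynomial.taylor z (l i)).coeff s| ≤ M := by
    intro i s
    simp only [Polynomial.taylor_coeff]
    exact isCompact_Icc.exists_bound_of_continuousOn (Polynomial.continuous _).continuousOn
  choose M hM using hbd
  have hM0 : ∀ i s, 0 ≤ M i s := fun i s => (abs_nonneg _).trans (hM i s 0 (by norm_num))
  refine ⟨1 + ∑ s ∈ Finset.range k, ∑ i ∈ Finset.range k, M i s, ?_, ?_⟩
  · have : 0 ≤ ∑ s ∈ Finset.range k, ∑ i ∈ Finset.range k, M i s :=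
      Finset.sum_nonneg fun s _ => Finset.sum_nonneg fun i _ => hM0 i s
    linarith
  intro P hP a L B hL hB s hs y hy
  have hB0 : 0 ≤ B := (abs_nonneg _).trans (hB a le_rfl (by linarith))
  set R : Polynomial ℝ := P.comp (Polynomial.C a + Polynomial.C L * Polynomial.X) with hR
  have hRdeg : R.natDegree < k := by
    refine lt_of_le_of_lt ?_ hP
    refine Polynomial.natDegree_comp_le.trans ?_
    have : (Polynomial.C a + Polynomial.C L * Polynomial.X).natDegree ≤ 1 := by compute_degree
    nlinarith
  have hinj : Set.InjOn v (Finset.range k) := by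
    intro i _ j _ h
    simp only [hv] at h
    field_simp at h
    exact_mod_cast h
  have hRint : R = ∑ i ∈ Finset.range k, Polynomial.C (R.eval (v i)) * l i := by
    have := Lagrange.eq_interpolate (f := R) hinj
      (by
        rw [Finset.card_range]
        exact Polynomial.degree_le_natDegree.trans_lt (by exact_mod_cast hRdeg))
    rwa [Lagrange.interpolate_apply] at this
  set z := (y - a) / L with hz
  have hzmem : z ∈ Set.Icc (-2:ℝ) 2 := by
    rw [Set.mem_Icc, ← abs_le, hz, abs_div, abs_of_pos hL, div_le_iff₀ hL]
    exact hy
  have hRv : ∀ i ∈ Finset.range k, |R.eval (v i)| ≤ B := by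
    intro i hi
    have hik : (i:ℝ) ≤ k := by exact_mod_cast (Finset.mem_range.1 hi).le
    have h1 : v i ≤ 1 := by rw [hv]; exact (div_le_one hk0).2 hik
    have h0 : 0 ≤ v i := by positivity
    simp only [hR, Polynomial.eval_comp, Polynomial.eval_add, Polynomial.eval_mul,
      Polynomial.eval_C, Polynomial.eval_X]
    exact hB _ (by nlinarith) (by nlinarith)
  have hcoef : (Polynomial.taylor y P).coeff s * L ^ s = (Polynomial.taylor z R).coeff s := by
    have : Polynomial.taylor z R = (Polynomial.taylor y P).comp (Polynomial.C L * Polynomial.X) := by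
      simp only [Polynomial.taylor_apply, hR, Polynomial.comp_assoc]
      congr 1
      simp only [Polynomial.add_comp, Polynomial.C_comp, Polynomial.mul_comp, Polynomial.X_comp,
        mul_add, ← Polynomial.C_mul]
      rw [hz, mul_div_cancel₀ _ hL.ne', sub_eq_add_neg, Polynomial.C_add, Polynomial.C_neg]
      ring
    rw [this, Polynomial.comp_C_mul_X_coeff]
  have habs : |(Polynomial.taylor y P).coeff s| * L ^ s = |(Polynomial.taylor z R).coeff s| := by
    rw [← hcoef, abs_mul, abs_of_pos (pow_pos hL s)]
  rw [habs, hRint, map_sum, Polynomial.finsetSum_coeff]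
  refine (Finset.abs_sum_le_sum_abs _ _).trans ?_
  calc ∑ i ∈ Finset.range k, |(Polynomial.taylor z (Polynomial.C (R.eval (v i)) * l i)).coeff s|
      ≤ ∑ i ∈ Finset.range k, B * M i s := by
        refine Finset.sum_le_sum fun i hi => ?_
        rw [Polynomial.taylor_mul, Polynomial.taylor_C, Polynomial.coeff_C_mul, abs_mul]
        exact mul_le_mul (hRv i hi) (hM i s z hzmem) (abs_nonneg _) hB0
    _ = (∑ i ∈ Finset.range k, M i s) * B := by rw [← Finset.mul_sum, mul_comm]
    _ ≤ _ := by
        refine mul_le_mul_of_nonneg_right ?_ hB0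
        have := Finset.single_le_sum (f := fun s => ∑ i ∈ Finset.range k, M i s)
          (fun s _ => Finset.sum_nonneg fun i _ => hM0 i s) (Finset.mem_range.2 hs)
        linarith

open Polynomial in
/-- The coefficient of `m ^ i`, as a polynomial in `p`, of the `s`-th central moment of the
binomial distribution with parameters `m` and `p`. -/
noncomputable def momentCoeff : ℕ → ℕ → ℝ[X]
  | 0, 0 => 1
  | 0, _ + 1 => 0
  | 1, _ => 0
  | s + 2, 0 => X * (1 - X) * derivative (momentCoeff (s + 1) 0)
  | s + 2, i + 1 => X * (1 - X) *
      (derivative (momentCoeff (s + 1) (i + 1)) + C ((s + 1 : ℕ) : ℝ) * momentCoeff s i)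

theorem momentCoeff_eq_zero : ∀ {s i : ℕ}, s < 2 * i → momentCoeff s i = 0
  | 0, i + 1, _ => by simp [momentCoeff]
  | 1, i, _ => by simp [momentCoeff]
  | s + 2, i + 1, h => by
    rw [momentCoeff, momentCoeff_eq_zero (s := s + 1) (i := i + 1) (by omega),
      momentCoeff_eq_zero (s := s) (i := i) (by omega)]
    simp

theorem momentCoeff_succ_zero : ∀ s : ℕ, momentCoeff (s + 1) 0 = 0
  | 0 => by simp [momentCoeff]
  | s + 1 => by rw [momentCoeff, momentCoeff_succ_zero s]; simp

open Polynomial in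
theorem X_pow_dvd_momentCoeff : ∀ s i : ℕ, (X : ℝ[X]) ^ i ∣ momentCoeff s i
  | 0, 0 => by simp
  | 0, i + 1 => by simp [momentCoeff]
  | 1, i => by simp [momentCoeff]
  | s + 2, 0 => by simp
  | s + 2, i + 1 => by
    rw [momentCoeff]
    obtain ⟨A, hA⟩ := X_pow_dvd_momentCoeff (s + 1) (i + 1)
    obtain ⟨B, hB⟩ := X_pow_dvd_momentCoeff s i
    rw [hA, hB, derivative_mul, derivative_X_pow]
    refine ⟨(1 - X) * (C ((i + 1 : ℕ) : ℝ) * A + X * derivative A + C ((s + 1 : ℕ) : ℝ) * B), ?_⟩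
    simp only [Nat.add_sub_cancel]
    ring

theorem exists_momentCoeff_bound (N : ℕ) : ∃ c : ℝ, 1 ≤ c ∧ ∀ s < N, ∀ i < N, ∀ p : ℝ,
    0 ≤ p → p ≤ 1 → |(momentCoeff s i).eval p| ≤ c * p ^ i := by
  choose A hA using X_pow_dvd_momentCoeff
  have hbd : ∀ s i : ℕ, ∃ M : ℝ, ∀ p ∈ Set.Icc (0:ℝ) 1, |(A s i).eval p| ≤ M := fun s i =>
    isCompact_Icc.exists_bound_of_continuousOn (Polynomial.continuous _).continuousOn
  choose M hM using hbd
  have hM0 : ∀ s i, 0 ≤ M s i := fun s i => (abs_nonneg _).trans (hM s i 0 (by norm_num))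
  refine ⟨1 + ∑ s ∈ Finset.range N, ∑ i ∈ Finset.range N, M s i, ?_, fun s hs i hi p hp0 hp1 => ?_⟩
  · have : 0 ≤ ∑ s ∈ Finset.range N, ∑ i ∈ Finset.range N, M s i :=
      Finset.sum_nonneg fun s _ => Finset.sum_nonneg fun i _ => hM0 s i
    linarith
  rw [hA, Polynomial.eval_mul, Polynomial.eval_pow, Polynomial.eval_X, abs_mul,
    abs_of_nonneg (pow_nonneg hp0 i), mul_comm]
  refine mul_le_mul_of_nonneg_right ((hM s i p ⟨hp0, hp1⟩).trans ?_) (pow_nonneg hp0 i)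
  have h1 := Finset.single_le_sum (f := fun s => ∑ i ∈ Finset.range N, M s i)
    (fun s _ => Finset.sum_nonneg fun i _ => hM0 s i) (Finset.mem_range.2 hs)
  have h2 := Finset.single_le_sum (f := fun i => M s i) (fun i _ => hM0 s i) (Finset.mem_range.2 hi)
  linarith

/-- The Bernstein basis polynomial `C(m,k) p^k (1-p)^{m-k}`, as a function of a real variable. -/
noncomputable def binomWeight (m k : ℕ) (p : ℝ) : ℝ := (m.choose k : ℝ) * p ^ k * (1 - p) ^ (m - k)

theorem binomWeight_nonneg (m k : ℕ) {p : ℝ} (hp0 : 0 ≤ p) (hp1 : p ≤ 1) :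
    0 ≤ binomWeight m k p := by
  have : 0 ≤ 1 - p := by linarith
  unfold binomWeight
  positivity

theorem sum_binomWeight (m : ℕ) (p : ℝ) : ∑ k ∈ Finset.range (m + 1), binomWeight m k p = 1 := by
  have := add_pow p (1 - p) m
  rw [add_sub_cancel, one_pow] at this
  rw [this]
  exact Finset.sum_congr rfl fun k _ => by unfold binomWeight; ring

theorem exists_hasDerivAt_binomWeight {m k : ℕ} (hk : k ≤ m) (p : ℝ) :
    ∃ d, HasDerivAt (binomWeight m k) d p ∧ p * (1 - p) * d = (k - m * p) * binomWeight m k p := by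
  have h := (((hasDerivAt_id p).pow k).const_mul (m.choose k : ℝ)).mul
    (((hasDerivAt_id p).const_sub 1).pow (m - k))
  refine ⟨_, h, ?_⟩
  have e1 : p * (k * p ^ (k - 1)) = k * p ^ k := by
    rcases k with _ | k
    · simp
    · simp [pow_succ]; ring
  have e2 : (1 - p) * (((m - k : ℕ) : ℝ) * (1 - p) ^ (m - k - 1)) = ((m:ℝ) - k) * (1 - p) ^ (m - k) := by
    rw [← Nat.cast_sub hk]
    rcases (m - k) with _ | j
    · simp
    · simp [pow_succ]; ring
  simp only [id, mul_one, binomWeight, Pi.pow_apply]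
  linear_combination ((m.choose k : ℝ) * (1 - p) * (1 - p) ^ (m - k)) * e1 -
    ((m.choose k : ℝ) * p * p ^ k) * e2

/-- The `s`-th central moment of the binomial distribution. -/
noncomputable def binomMoment (m s : ℕ) (p : ℝ) : ℝ :=
  ∑ k ∈ Finset.range (m + 1), binomWeight m k p * (k - m * p) ^ s

theorem exists_hasDerivAt_binomMoment (m s : ℕ) (p : ℝ) :
    ∃ d, HasDerivAt (binomMoment m s) d p ∧
      p * (1 - p) * d = binomMoment m (s + 1) p - s * m * (p * (1 - p)) * binomMoment m (s - 1) p := by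
  have hw : ∀ k, ∃ d, k ∈ Finset.range (m + 1) → HasDerivAt (binomWeight m k) d p ∧
      p * (1 - p) * d = (k - m * p) * binomWeight m k p := by
    intro k
    by_cases hk : k ∈ Finset.range (m + 1)
    · obtain ⟨d, hd⟩ := exists_hasDerivAt_binomWeight (Nat.lt_succ_iff.1 (Finset.mem_range.1 hk)) p
      exact ⟨d, fun _ => hd⟩
    · exact ⟨0, fun h => absurd h hk⟩
  choose d hd using hw
  refine ⟨∑ k ∈ Finset.range (m + 1), (d k * (k - m * p) ^ s +
    binomWeight m k p * (s * (k - m * p) ^ (s - 1) * (-m))), ?_, ?_⟩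
  · refine HasDerivAt.fun_sum fun k hk => ?_
    have h2 : HasDerivAt (fun p : ℝ => ((k:ℝ) - m * p) ^ s) (s * (k - m * p) ^ (s - 1) * (-m)) p := by
      simpa using (((hasDerivAt_id p).const_mul (m:ℝ)).const_sub (k:ℝ)).fun_pow s
    exact (hd k hk).1.mul h2
  · simp only [binomMoment, Finset.mul_sum]
    rw [← Finset.sum_sub_distrib]
    refine Finset.sum_congr rfl fun k hk => ?_
    linear_combination (k - m * p) ^ s * (hd k hk).2

theorem binomMoment_eq_sum (m : ℕ) : ∀ (s D : ℕ), s < D → ∀ p : ℝ,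
    binomMoment m s p = ∑ i ∈ Finset.range D, (m:ℝ) ^ i * (momentCoeff s i).eval p
  | 0, D, h, p => by
    obtain ⟨D, rfl⟩ := Nat.exists_eq_add_of_lt h
    rw [zero_add, Finset.sum_range_succ']
    simp [binomMoment, momentCoeff, sum_binomWeight]
  | 1, D, h, p => by
    obtain ⟨d, hd, h⟩ := exists_hasDerivAt_binomMoment m 0 p
    have h0 : binomMoment m 0 = fun _ => 1 := by
      funext y; simp [binomMoment, sum_binomWeight]
    rw [h0] at hd
    rw [hd.unique (hasDerivAt_const p 1)] at h
    simp only [mul_zero, Nat.cast_zero, zero_mul, zero_add, sub_zero] at h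
    rw [← h]
    simp [momentCoeff]
  | s + 2, D, h, p => by
    obtain ⟨D, rfl⟩ := Nat.exists_eq_add_of_le' (show 1 ≤ D by omega)
    obtain ⟨d, hd, h'⟩ := exists_hasDerivAt_binomMoment m (s + 1) p
    have h1 := funext fun y => binomMoment_eq_sum m (s + 1) (D + 1) (by omega) y
    rw [h1] at hd
    have hd' : HasDerivAt (fun y => ∑ i ∈ Finset.range (D + 1),
        (m:ℝ) ^ i * (momentCoeff (s + 1) i).eval y)
        (∑ i ∈ Finset.range (D + 1), (m:ℝ) ^ i * (momentCoeff (s + 1) i).derivative.eval p) p :=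
      HasDerivAt.fun_sum fun i _ => ((momentCoeff (s + 1) i).hasDerivAt p).const_mul _
    rw [hd.unique hd', Nat.add_sub_cancel, binomMoment_eq_sum m s D (by omega) p] at h'
    have h2 : binomMoment m (s + 2) p = _ := (sub_eq_iff_eq_add.1 h'.symm)
    rw [h2, Finset.sum_range_succ', Finset.sum_range_succ']
    simp only [momentCoeff, Polynomial.eval_mul, Polynomial.eval_add, Polynomial.eval_sub,
      Polynomial.eval_X, Polynomial.eval_one, Polynomial.eval_C, pow_succ]
    rw [mul_add, Finset.mul_sum, Finset.mul_sum, add_right_comm, ← Finset.sum_add_distrib]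
    push_cast
    congr 1
    · exact Finset.sum_congr rfl fun i _ => by ring
    · ring

theorem bernstein'_eq (m : ℕ) (g : ℝ → ℝ) (p : ℝ) :
    bernstein' m g p = ∑ k ∈ Finset.range (m + 1), binomWeight m k p * g ((k : ℝ) / m) := rfl

theorem bernstein'_sub_pow {m : ℕ} (hm : 0 < m) (s : ℕ) (p : ℝ) :
    bernstein' m (fun x => (x - p) ^ s) p = binomMoment m s p / m ^ s := by
  have hm' : (m:ℝ) ≠ 0 := by positivity
  rw [bernstein'_eq, binomMoment, Finset.sum_div]
  refine Finset.sum_congr rfl fun k _ => ?_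
  rw [mul_div_assoc, ← div_pow]
  congr 2
  field_simp

theorem exists_binomMoment_even_bound (M : ℕ) : ∃ c : ℝ, 1 ≤ c ∧ ∀ (m : ℕ) (N p q : ℝ),
    0 ≤ p → p ≤ 1 → p ≤ q → (m:ℝ) ≤ N → 1 ≤ N * q → binomMoment m (2 * M) p ≤ c * (N * q) ^ M := by
  obtain ⟨c, hc, h⟩ := exists_momentCoeff_bound (2 * M + 1)
  refine ⟨(2 * M + 1 : ℕ) * c, ?_, fun m N p q hp hp1 hpq hmN hNq => ?_⟩
  · have : (1:ℝ) ≤ (2 * M + 1 : ℕ) := by exact_mod_cast Nat.le_add_left 1 _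
    nlinarith
  rw [binomMoment_eq_sum m (2 * M) (2 * M + 1) (by omega)]
  have hle : ∀ i ∈ Finset.range (2 * M + 1), (m:ℝ) ^ i * (momentCoeff (2 * M) i).eval p ≤
      c * (N * q) ^ M := by
    intro i hi
    by_cases hiM : i ≤ M
    · calc (m:ℝ) ^ i * (momentCoeff (2 * M) i).eval p ≤ m ^ i * (c * p ^ i) := by
            gcongr
            exact (le_abs_self _).trans (h _ (by omega) _ (Finset.mem_range.1 hi) p hp hp1)
        _ = c * (m * p) ^ i := by ring
        _ ≤ c * (N * q) ^ i := by
            have : (0:ℝ) ≤ N := (Nat.cast_nonneg m).trans hmN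
            gcongr
        _ ≤ c * (N * q) ^ M := by gcongr
    · rw [momentCoeff_eq_zero (by omega)]
      simp only [Polynomial.eval_zero, mul_zero]
      have : 0 ≤ N * q := by linarith
      positivity
  refine (Finset.sum_le_sum hle).trans (le_of_eq ?_)
  rw [Finset.sum_const, Finset.card_range, nsmul_eq_mul, mul_assoc]

theorem sum_jackCoeff_mul_inv_pow {r : ℕ} {ns : Fin r → ℕ} (hinj : Function.Injective ns)
    (hpos : ∀ i, 0 < ns i) {j : ℕ} (hj : j < r) :
    ∑ i, jackCoeff ns i * ((ns i : ℝ)⁻¹) ^ j = if j = 0 then 1 else 0 := by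
  have hne : ∀ i, (ns i : ℝ) ≠ 0 := fun i => by exact_mod_cast (hpos i).ne'
  have hvs : Set.InjOn (fun i : Fin r => ((ns i : ℝ))⁻¹) (Finset.univ : Finset (Fin r)) := by
    intro a _ b _ hab
    exact hinj (by exact_mod_cast inv_injective hab)
  have h := Lagrange.eq_interpolate (f := (Polynomial.X : Polynomial ℝ) ^ j) hvs
    (by rw [Polynomial.degree_X_pow, Finset.card_univ, Fintype.card_fin]; exact_mod_cast hj)
  have h0 := congrArg (Polynomial.eval 0) h
  rw [Lagrange.interpolate_apply, Polynomial.eval_finsetSum] at h0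
  have hlhs : Polynomial.eval (0:ℝ) (Polynomial.X ^ j) = if j = 0 then 1 else 0 := by
    simp [zero_pow_eq]
  rw [← hlhs, h0]
  refine Finset.sum_congr rfl fun i _ => ?_
  rw [Polynomial.eval_mul, Polynomial.eval_C, Polynomial.eval_pow, Polynomial.eval_X, mul_comm]
  congr 1
  rw [Lagrange.basis, Polynomial.eval_prod, jackCoeff]
  refine Finset.prod_congr rfl fun j hj => ?_
  have hij : (ns i : ℝ) - ns j ≠ 0 := by
    rw [sub_ne_zero]
    exact_mod_cast fun h => (Finset.ne_of_mem_erase hj) (hinj h).symm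
  have hij' : (ns i : ℝ)⁻¹ - (ns j : ℝ)⁻¹ ≠ 0 := by
    rw [sub_ne_zero]
    exact fun h => hij (sub_eq_zero.2 (inv_injective h))
  have hi := hne i
  have hj := hne j
  simp only [Lagrange.basisDivisor, Polynomial.eval_mul, Polynomial.eval_C, Polynomial.eval_sub,
    Polynomial.eval_X, zero_sub]
  rw [div_eq_iff hij, inv_mul_eq_div, div_mul_eq_mul_div, eq_div_iff hij']
  field_simp
  ring

theorem abs_sum_jackCoeff_mul_inv_pow_le {r : ℕ} {ns : Fin r → ℕ} {K C N : ℝ} (hK : 0 < K) (hN : 0 < N)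
    (hpos : ∀ i, 0 < ns i) (hlow : ∀ i, N ≤ K * ns i) (hC : ∑ i, |jackCoeff ns i| ≤ C) (j : ℕ) :
    |∑ i, jackCoeff ns i * ((ns i : ℝ)⁻¹) ^ j| ≤ C * (K / N) ^ j := by
  refine (Finset.abs_sum_le_sum_abs _ _).trans ?_
  have hle : ∀ i ∈ Finset.univ, |jackCoeff ns i * ((ns i : ℝ)⁻¹) ^ j| ≤
      |jackCoeff ns i| * (K / N) ^ j := by
    intro i _
    have hi : (0:ℝ) < ns i := by exact_mod_cast hpos i
    rw [abs_mul, abs_of_nonneg (by positivity : 0 ≤ ((ns i : ℝ)⁻¹) ^ j)]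
    gcongr
    rw [inv_eq_one_div, div_le_div_iff₀ hi hN]
    linarith [hlow i]
  refine (Finset.sum_le_sum hle).trans ?_
  rw [← Finset.sum_mul]
  gcongr

/-- The jackknife bias of a polynomial of degree `< 2r` is governed by its Taylor coefficients of
order between `r + 1` and `2r - 1`. -/
theorem exists_jackknife_polynomial_bound (r : ℕ) (K C : ℝ) (hK : 1 ≤ K) (hC0 : 0 < C) :
    ∃ c : ℝ, 0 < c ∧ ∀ (ns : Fin r → ℕ) (N p q B : ℝ) (P : Polynomial ℝ),
      Function.Injective ns → (∀ i, 0 < ns i) → (∀ i, N ≤ K * ns i) →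
      ∑ i, |jackCoeff ns i| ≤ C → 0 < N → 0 ≤ p → p ≤ q → q ≤ 1 → 1 ≤ N * q → 0 < r →
      P.natDegree < 2 * r → 0 ≤ B →
      (∀ s, r < s → s < 2 * r → |(Polynomial.taylor p P).coeff s| * q ^ (s - r) ≤ B * N ^ r) →
      |∑ i, jackCoeff ns i * bernstein' (ns i) (fun x => P.eval x) p - P.eval p| ≤ c * B := by
  obtain ⟨a, ha, hA⟩ := exists_momentCoeff_bound (2 * r)
  refine ⟨1 + ((2 * r : ℕ) : ℝ) * ((2 * r : ℕ) * (a * C * K ^ (2 * r))), by positivity, ?_⟩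
  intro ns N p q B P hinj hpos hlow hC hN hp hpq hq hNq hr hdeg hB hco
  have hq0 : 0 ≤ q := hp.trans hpq
  have hp1 : p ≤ 1 := hpq.trans hq
  set t : ℕ → ℝ := fun s => (Polynomial.taylor p P).coeff s with ht
  have hterm : ∀ i, bernstein' (ns i) (fun x => P.eval x) p =
      ∑ s ∈ Finset.range (2 * r), ∑ l ∈ Finset.range (2 * r),
        t s * (momentCoeff s l).eval p * ((ns i : ℝ)⁻¹) ^ (s - l) := by
    intro i
    have hi : (ns i : ℝ) ≠ 0 := by exact_mod_cast (hpos i).ne'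
    have h1 : bernstein' (ns i) (fun x => P.eval x) p = ∑ s ∈ Finset.range (2 * r),
        t s * bernstein' (ns i) (fun x => (x - p) ^ s) p := by
      simp only [eval_eq_sum_taylor_coeff hdeg p, bernstein'_eq, Finset.mul_sum]
      rw [Finset.sum_comm]
      exact Finset.sum_congr rfl fun s _ => Finset.sum_congr rfl fun k _ => by ring
    rw [h1]
    refine Finset.sum_congr rfl fun s hs => ?_
    rw [bernstein'_sub_pow (hpos i), binomMoment_eq_sum _ s _ (Finset.mem_range.1 hs),
      Finset.sum_div, Finset.mul_sum]
    refine Finset.sum_congr rfl fun l _ => ?_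
    rcases le_or_gt l s with hls | hls
    · rw [inv_pow]
      obtain ⟨e, rfl⟩ := Nat.exists_eq_add_of_le hls
      rw [Nat.add_sub_cancel_left, pow_add]
      field_simp
    · rw [momentCoeff_eq_zero (by omega)]
      simp
  have hsum : ∑ i, jackCoeff ns i * bernstein' (ns i) (fun x => P.eval x) p =
      ∑ s ∈ Finset.range (2 * r), ∑ l ∈ Finset.range (2 * r),
        t s * (momentCoeff s l).eval p * ∑ i, jackCoeff ns i * ((ns i : ℝ)⁻¹) ^ (s - l) := by
    simp only [hterm, Finset.mul_sum]
    rw [Finset.sum_comm]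
    refine Finset.sum_congr rfl fun s _ => ?_
    rw [Finset.sum_comm]
    exact Finset.sum_congr rfl fun l _ => Finset.sum_congr rfl fun i _ => by ring
  have hbound : ∀ s < 2 * r, 1 ≤ s → ∀ l < 2 * r, |t s * (momentCoeff s l).eval p *
      ∑ i, jackCoeff ns i * ((ns i : ℝ)⁻¹) ^ (s - l)| ≤ a * C * K ^ (2 * r) * B := by
    intro s hs hs1 l hl
    by_cases hls : s < 2 * l
    · rw [momentCoeff_eq_zero hls]
      simp only [Polynomial.eval_zero, mul_zero, zero_mul, abs_zero]
      positivity
    rcases Nat.eq_zero_or_pos l with rfl | hl0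
    · obtain ⟨s, rfl⟩ := Nat.exists_eq_add_of_le' hs1
      rw [momentCoeff_succ_zero]
      simp only [Polynomial.eval_zero, mul_zero, zero_mul, abs_zero]
      positivity
    by_cases hj : s - l < r
    · rw [sum_jackCoeff_mul_inv_pow hinj hpos hj, if_neg (by omega), mul_zero, abs_zero]
      positivity
    obtain ⟨e, rfl⟩ : ∃ e, s = l + (r + e) := ⟨s - l - r, by omega⟩
    have h1 := abs_sum_jackCoeff_mul_inv_pow_le (by linarith) hN hpos hlow hC (l + (r + e) - l)
    have h2 := hA _ hs l hl p hp hp1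
    have h3 := hco _ (by omega) hs
    rw [Nat.add_sub_cancel_left] at h1 ⊢
    rw [show l + (r + e) - r = l + e by omega] at h3
    change |t _| * _ ≤ _ at h3
    rw [abs_mul, abs_mul]
    have hqN : 0 < q := pos_of_mul_pos_right (by linarith) hN.le
    have h4 : |t (l + (r + e))| * p ^ l ≤ B * N ^ (r + e) := by
      have h5 : |t (l + (r + e))| * p ^ l * q ^ e ≤ B * N ^ r := by
        refine le_trans ?_ h3
        rw [pow_add, ← mul_assoc]
        gcongr
      have h6 : 1 ≤ (N * q) ^ e := one_le_pow₀ hNq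
      have h7 : |t (l + (r + e))| * p ^ l * q ^ e ≤ B * N ^ (r + e) * q ^ e := by
        calc _ ≤ B * N ^ r := h5
          _ ≤ B * N ^ r * (N * q) ^ e := le_mul_of_one_le_right (by positivity) h6
          _ = _ := by rw [mul_pow, pow_add]; ring
      exact le_of_mul_le_mul_right h7 (by positivity)
    calc |t (l + (r + e))| * |(momentCoeff (l + (r + e)) l).eval p| *
          |∑ i, jackCoeff ns i * ((ns i : ℝ)⁻¹) ^ (r + e)|
        ≤ |t (l + (r + e))| * (a * p ^ l) * (C * (K / N) ^ (r + e)) := by gcongr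
      _ = a * C * (K / N) ^ (r + e) * (|t (l + (r + e))| * p ^ l) := by ring
      _ ≤ a * C * (K / N) ^ (r + e) * (B * N ^ (r + e)) := by gcongr
      _ = a * C * K ^ (r + e) * B := by rw [div_pow]; field_simp
      _ ≤ a * C * K ^ (2 * r) * B := by gcongr; omega
  have hPp : P.eval p = t 0 := by simp [ht, Polynomial.taylor_coeff_zero]
  have hzero : ∑ l ∈ Finset.range (2 * r), t 0 * (momentCoeff 0 l).eval p *
      ∑ i, jackCoeff ns i * ((ns i : ℝ)⁻¹) ^ (0 - l) = t 0 := by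
    rw [Finset.sum_eq_single_of_mem 0 (Finset.mem_range.2 (by omega))]
    · rw [sum_jackCoeff_mul_inv_pow hinj hpos (by omega)]
      simp [momentCoeff]
    · intro l _ hl
      rw [momentCoeff_eq_zero (by omega)]
      simp
  rw [hsum, hPp]
  obtain ⟨d, hd⟩ : ∃ d, 2 * r = d + 1 := ⟨2 * r - 1, by omega⟩
  have hsplit : ∀ g : ℕ → ℝ, ∑ s ∈ Finset.range (2 * r), g s = (∑ s ∈ Finset.range d, g (s + 1)) + g 0 := by
    intro g; rw [hd, Finset.sum_range_succ']
  rw [hsplit, hzero, add_sub_cancel_right]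
  refine (Finset.abs_sum_le_sum_abs _ _).trans ?_
  have hin : ∀ s ∈ Finset.range d, |∑ l ∈ Finset.range (2 * r), t (s + 1) *
      (momentCoeff (s + 1) l).eval p * ∑ i, jackCoeff ns i * ((ns i : ℝ)⁻¹) ^ (s + 1 - l)| ≤
      (2 * r : ℕ) * (a * C * K ^ (2 * r) * B) := by
    intro s hs
    refine (Finset.abs_sum_le_sum_abs _ _).trans ?_
    refine (Finset.sum_le_sum fun l hl => hbound (s + 1) ?_ (by omega) l (Finset.mem_range.1 hl)).trans
      (le_of_eq ?_)
    · have := Finset.mem_range.1 hs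
      omega
    · rw [Finset.sum_const, Finset.card_range, nsmul_eq_mul]
  refine (Finset.sum_le_sum hin).trans ?_
  rw [Finset.sum_const, Finset.card_range, nsmul_eq_mul]
  have hdr : (d:ℝ) ≤ (2 * r : ℕ) := by exact_mod_cast (by omega : d ≤ 2 * r)
  calc (d:ℝ) * ((2 * r : ℕ) * (a * C * K ^ (2 * r) * B))
      ≤ (2 * r : ℕ) * ((2 * r : ℕ) * (a * C * K ^ (2 * r) * B)) := by gcongr
    _ = ((2 * r : ℕ) : ℝ) * ((2 * r : ℕ) * (a * C * K ^ (2 * r))) * B := by ring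
    _ ≤ _ := by gcongr; linarith

/-- Forward differences of order `2r` are bounded by `ω` for all steps small compared with
`√(u / N)`, where `u ≤ 7/8` is the centre of the difference. -/
def DiffBound (r : ℕ) (f : ℝ → ℝ) (N ω : ℝ) : Prop :=
  ∀ x v : ℝ, 0 ≤ x → 0 < v → x + 2 * r * v ≤ 7 / 8 → v ^ 2 ≤ (x + r * v) / (8 * N) →
    |(fwdDiff v)^[2 * r] f x| ≤ ω

/-- Near `q`, `f` is approximated by a Taylor polynomial of its Steklov mean at scale `√(q / N)`. -/
theorem exists_local_polynomial (r : ℕ) (hr : 1 ≤ r) : ∃ c : ℝ, 1 ≤ c ∧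
    ∀ (f : ℝ → ℝ) (N ω : ℝ), Continuous f → 2 ≤ N → 0 ≤ ω → DiffBound r f N ω →
      ∀ q, 1 / N ≤ q → q ≤ 1 / 2 → ∃ P : Polynomial ℝ, P.natDegree < 2 * r ∧
        ∀ x, 0 ≤ x → x ≤ 3 / 4 → (q / 2 ≤ x ∨ q = 1 / N) →
          |f x - P.eval x| ≤ c * ω * (1 + ((x - q) ^ 2 * (N / q)) ^ r) := by
  obtain ⟨c, hc, hS⟩ := exists_steklov (k := 2 * r) (by omega)
  have hr1 : (1:ℝ) ≤ r := by exact_mod_cast hr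
  refine ⟨c * (16 * r) ^ (2 * r), ?_, ?_⟩
  · have : (1:ℝ) ≤ (16 * r) ^ (2 * r) := one_le_pow₀ (by linarith)
    nlinarith
  intro f N ω hf hN hω hD q hq1 hq2
  have hN0 : 0 < N := by linarith
  have hq0 : 0 < q := lt_of_lt_of_le (by positivity) hq1
  set ρ := Real.sqrt (q / N) with hρ
  have hρ0 : 0 < ρ := by positivity
  have hρsq : ρ ^ 2 = q / N := Real.sq_sqrt (by positivity)
  have hρ1 : ρ ≤ 1 := by
    rw [hρ, Real.sqrt_le_one, div_le_one hN0]
    linarith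
  set η := ρ / (16 * r) with hη
  have hη0 : 0 < η := by positivity
  obtain ⟨F, hFc, hF⟩ := hS f hf η hη0
  obtain ⟨P, hPdeg, hP⟩ := exists_taylor_polynomial (by omega) hFc q
  have hvalid : ∀ x, 0 ≤ x → x ≤ 3 / 4 → (q / 2 ≤ x ∨ q = 1 / N) →
      |f x - F x| ≤ ω ∧ |iteratedDeriv (2 * r) F x| ≤ c * ω / η ^ (2 * r) := by
    intro x hx0 hx1 hx
    refine hF x ω fun v hv0 hv => hD x v hx0 hv0 ?_ ?_
    · have : (16 * r) * v ≤ ρ := by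
        rw [hη, le_div_iff₀ (by positivity)] at hv
        linarith
      nlinarith
    · rw [le_div_iff₀ (by positivity)]
      have hv' : v * (16 * r) ≤ ρ := by rwa [hη, le_div_iff₀ (by positivity)] at hv
      have hv16 : v * 16 ≤ ρ := by nlinarith
      rcases hx with hx | hx
      · have h1 : (v * 16) ^ 2 ≤ q / N := by
          rw [← hρsq]
          gcongr
        rw [le_div_iff₀ hN0] at h1
        have : 0 ≤ r * v := by positivity
        nlinarith
      · have h1 : ρ = 1 / N := by
          rw [hρ, hx, show 1 / N / N = (1 / N) ^ 2 by field_simp]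
          exact Real.sqrt_sq (by positivity)
        rw [h1, le_div_iff₀ hN0] at hv16
        have : v * (v * 16 * N) ≤ v * 1 := by gcongr
        nlinarith
  refine ⟨P, ?_, fun x hx0 hx1 hx => ?_⟩
  · by_cases hP0 : P = 0
    · simp [hP0]; omega
    · exact (Polynomial.natDegree_lt_iff_degree_lt hP0).2 hPdeg
  have h1 := (hvalid x hx0 hx1 hx).1
  have h2 := hP x (c * ω / η ^ (2 * r)) fun y hy => by
    have hy' := Set.uIcc_subset_Icc (a₂ := min q x) (b₂ := 3 / 4)
      ⟨min_le_left _ _, by linarith⟩ ⟨min_le_right _ _, hx1⟩ hy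
    refine (hvalid y ?_ hy'.2 ?_).2
    · exact (le_min hq0.le hx0).trans hy'.1
    · exact hx.imp_left fun h => (le_min (by linarith) h).trans hy'.1
  have h3 : c * ω / η ^ (2 * r) * |x - q| ^ (2 * r) =
      c * (16 * r) ^ (2 * r) * ω * ((x - q) ^ 2 * (N / q)) ^ r := by
    rw [pow_mul |x - q|, sq_abs, hη, div_pow ρ, pow_mul ρ, hρsq, mul_pow ((x - q) ^ 2),
      div_pow q, div_pow N]
    field_simp
  rw [h3] at h2
  have h4 : (1:ℝ) ≤ c * (16 * r) ^ (2 * r) := by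
    have : (1:ℝ) ≤ (16 * r) ^ (2 * r) := one_le_pow₀ (by linarith)
    nlinarith
  calc |f x - P.eval x| ≤ |f x - F x| + |F x - P.eval x| := abs_sub_le _ _ _
    _ ≤ 1 * ω + c * (16 * r) ^ (2 * r) * ω * ((x - q) ^ 2 * (N / q)) ^ r := by linarith
    _ ≤ c * (16 * r) ^ (2 * r) * ω + c * (16 * r) ^ (2 * r) * ω * ((x - q) ^ 2 * (N / q)) ^ r := by
      gcongr
    _ = _ := by ring

theorem sq_mul_div_le {N q q' a : ℝ} (hN : 0 ≤ N) (hq : 0 < q) (hq' : 0 < q') (hqq' : q ≤ q')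
    (ha : |a| ≤ q) : a ^ 2 * (N / q') ≤ N * q := by
  have h : a ^ 2 ≤ q ^ 2 := by
    rw [← sq_abs]
    gcongr
  calc a ^ 2 * (N / q') ≤ q ^ 2 * (N / q) := by gcongr
    _ = N * q := by field_simp

set_option maxHeartbeats 400000 in
/-- The local polynomials approximate `f` on all of `[0, 1]` up to polynomial growth, and their
Taylor coefficients of order above `r` are controlled by telescoping over dyadic scales. -/
theorem exists_global_approx (r : ℕ) (hr : 1 ≤ r) : ∃ c : ℝ, 1 ≤ c ∧
    ∀ (f : ℝ → ℝ) (N W : ℝ), Continuous f → 2 ≤ N → 0 ≤ W → DiffBound r f N W →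
      (∀ x, 0 ≤ x → x ≤ 1 → |f x| ≤ W * N ^ r) → ∀ q, 1 / N ≤ q → q ≤ 1 / 2 →
      ∃ P : Polynomial ℝ, P.natDegree < 2 * r ∧
        (∀ x, 0 ≤ x → x ≤ 1 →
          |f x - P.eval x| ≤ c * W * (1 + ((x - q) ^ 2 * (N / q)) ^ (2 * r))) ∧
        ∀ y, 0 ≤ y → y ≤ q → ∀ s, r < s → s < 2 * r →
          |(Polynomial.taylor y P).coeff s| * q ^ (s - r) ≤ c * W * N ^ r := by
  obtain ⟨c₁, hc₁, hloc⟩ := exists_local_polynomial r hr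
  obtain ⟨c₂, hc₂, hmar⟩ := exists_taylor_coeff_bound (2 * r) (by omega)
  set A : ℝ := 3 * 4 ^ (3 * r) * (c₁ * c₂) with hA
  have hc12 : 1 ≤ c₁ * c₂ := one_le_mul_of_one_le_of_one_le hc₁ hc₂
  have hA1 : 8 * (c₁ * c₂) ≤ A := by
    have : (4:ℝ) ^ 1 ≤ 4 ^ (3 * r) := pow_le_pow_right₀ (by norm_num) (by omega)
    rw [hA]
    nlinarith
  refine ⟨A + 10 * 16 ^ r * (c₁ * c₂) + 2 * c₁, ?_, ?_⟩
  · have : 0 ≤ 10 * (16:ℝ) ^ r * (c₁ * c₂) := by positivity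
    linarith
  intro f N W hf hN hW hD hfS
  have hN0 : 0 < N := by linarith
  have hex : ∀ q : ℝ, ∃ P : Polynomial ℝ, 1 / N ≤ q → q ≤ 1 / 2 → P.natDegree < 2 * r ∧
        ∀ x, 0 ≤ x → x ≤ 3 / 4 → (q / 2 ≤ x ∨ q = 1 / N) →
          |f x - P.eval x| ≤ c₁ * W * (1 + ((x - q) ^ 2 * (N / q)) ^ r) := by
    intro q
    by_cases h : 1 / N ≤ q ∧ q ≤ 1 / 2
    · obtain ⟨P, hP⟩ := hloc f N W hf hN hW hD q h.1 h.2
      exact ⟨P, fun _ _ => hP⟩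
    · exact ⟨0, fun h1 h2 => absurd ⟨h1, h2⟩ h⟩
  choose P hP using hex
  have hpos : ∀ q, 1 / N ≤ q → 0 < q := fun q h => lt_of_lt_of_le (by positivity) h
  have hNq : ∀ q, 1 / N ≤ q → 1 ≤ N * q := fun q h => by
    rw [div_le_iff₀ hN0] at h
    linarith
  have hclose : ∀ q, 1 / N ≤ q → q ≤ 1 / 2 → ∀ x, 0 ≤ x → x ≤ 3 / 4 → (q / 2 ≤ x ∨ q = 1 / N) →
      ∀ b : ℝ, 1 ≤ b → ((x - q) ^ 2 * (N / q)) ^ r ≤ b → |f x - (P q).eval x| ≤ 2 * c₁ * W * b := by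
    intro q h1 h2 x hx0 hx1 hx b hb hle
    refine ((hP q h1 h2).2 x hx0 hx1 hx).trans ?_
    calc _ ≤ c₁ * W * (b + b) := by gcongr
      _ = _ := by ring
  have hmid : ∀ q, 1 / N ≤ q → q ≤ 1 / 2 → ∀ x, 1 / 2 ≤ x → x ≤ 1 / 2 + 1 / 4 →
      |(P q).eval x| ≤ 3 * c₁ * W * (N / q) ^ r := by
    intro q h1 h2 x hx1 hx2
    have hq := hpos q h1
    have hNq1 : N ≤ N / q := by rw [le_div_iff₀ hq]; nlinarith
    have h3 := hclose q h1 h2 x (by linarith) (by linarith) (Or.inl (by linarith)) ((N / q) ^ r)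
      (one_le_pow₀ (by linarith)) (by
        gcongr
        refine mul_le_of_le_one_left (by positivity) ?_
        nlinarith)
    have h4 := hfS x (by linarith) (by linarith)
    have h5 : W * N ^ r ≤ c₁ * W * (N / q) ^ r := by
      have : N ^ r ≤ (N / q) ^ r := by gcongr
      calc W * N ^ r ≤ 1 * (W * (N / q) ^ r) := by rw [one_mul]; gcongr
        _ ≤ c₁ * (W * (N / q) ^ r) := by gcongr
        _ = _ := by ring
    calc |(P q).eval x| = |f x - (f x - (P q).eval x)| := by ring_nf
      _ ≤ |f x| + |f x - (P q).eval x| := abs_sub _ _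
      _ ≤ _ := by linarith
  have hmidext : ∀ q, 1 / N ≤ q → q ≤ 1 / 2 → ∀ y, 0 ≤ y → y ≤ 1 → ∀ s < 2 * r,
      |(Polynomial.taylor y (P q)).coeff s| * (1 / 4) ^ s ≤ c₂ * (3 * c₁ * W * (N / q) ^ r) := by
    intro q h1 h2 y hy0 hy1 s hs
    exact hmar (P q) (hP q h1 h2).1 (1 / 2) (1 / 4) _ (by norm_num) (hmid q h1 h2) s hs y
      (abs_le.2 ⟨by linarith, by linarith⟩)
  have hstep : ∀ q, 1 / N ≤ q → 2 * q ≤ 1 / 2 → ∀ y, 0 ≤ y → y ≤ q → ∀ s, r < s → s < 2 * r →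
      |(Polynomial.taylor y (P q)).coeff s - (Polynomial.taylor y (P (2 * q))).coeff s| *
        q ^ (s - r) ≤ 4 * (c₁ * c₂) * W * N ^ r := by
    intro q h1 h2 y hy0 hy1 s hrs hs
    have hq := hpos q h1
    have hb := one_le_pow₀ (hNq q h1) (n := r)
    have h3 := hmar (P q - P (2 * q)) ((Polynomial.natDegree_sub_le _ _).trans_lt
      (max_lt (hP q h1 (by linarith)).1 (hP (2 * q) (by linarith) h2).1)) q q
      (4 * c₁ * W * (N * q) ^ r) hq (fun x hx1 hx2 => by
        have e1 := hclose q h1 (by linarith) x (by linarith) (by linarith) (Or.inl (by linarith))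
          _ hb (pow_le_pow_left₀ (by positivity)
            (sq_mul_div_le hN0.le hq hq le_rfl (abs_le.2 ⟨by linarith, by linarith⟩)) _)
        have e2 := hclose (2 * q) (by linarith) h2 x (by linarith) (by linarith)
          (Or.inl (by linarith)) _ hb (pow_le_pow_left₀ (by positivity)
            (sq_mul_div_le hN0.le hq (by linarith) (by linarith)
              (abs_le.2 ⟨by linarith, by linarith⟩)) _)
        rw [abs_sub_comm] at e1
        rw [Polynomial.eval_sub]
        have := abs_sub_le ((P q).eval x) (f x) ((P (2 * q)).eval x)
        linarith) s hs y (by rw [abs_le]; constructor <;> linarith)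
    rw [map_sub, Polynomial.coeff_sub] at h3
    obtain ⟨e, rfl⟩ := Nat.exists_eq_add_of_lt hrs
    rw [show r + e + 1 - r = e + 1 by omega]
    rw [show r + e + 1 = (e + 1) + r by omega] at h3 ⊢
    rw [pow_add, mul_pow] at h3
    refine le_of_mul_le_mul_right ?_ (pow_pos hq r)
    linarith
  have hcoef : ∀ i : ℕ, ∀ q, 1 / N ≤ q → q ≤ 1 / 2 → 1 / 4 ≤ 2 ^ i * q → ∀ y, 0 ≤ y → y ≤ q →
      ∀ s, r < s → s < 2 * r →
      |(Polynomial.taylor y (P q)).coeff s| * q ^ (s - r) ≤ A * W * N ^ r := by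
    have hbase : ∀ q, 1 / N ≤ q → q ≤ 1 / 2 → 1 / 4 ≤ q → ∀ y, 0 ≤ y → y ≤ q →
      ∀ s, r < s → s < 2 * r →
      |(Polynomial.taylor y (P q)).coeff s| * q ^ (s - r) ≤ A * W * N ^ r := by
      intro q h1 h2 h3 y hy0 hy1 s hrs hs
      have h4 := hmidext q h1 h2 y hy0 (by linarith) s hs
      have hq := hpos q h1
      have h5 : q ^ (s - r) ≤ 1 := pow_le_one₀ hq.le (by linarith)
      have h6 : (N / q) ^ r ≤ (4 * N) ^ r := by
        gcongr
        rw [div_le_iff₀ hq]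
        nlinarith
      have h7 : (4:ℝ) ^ s ≤ 4 ^ (2 * r) := pow_le_pow_right₀ (by norm_num) hs.le
      have h8 : |(Polynomial.taylor y (P q)).coeff s| =
          |(Polynomial.taylor y (P q)).coeff s| * (1 / 4) ^ s * 4 ^ s := by
        rw [mul_assoc, ← mul_pow]; norm_num
      calc |(Polynomial.taylor y (P q)).coeff s| * q ^ (s - r)
          ≤ |(Polynomial.taylor y (P q)).coeff s| := mul_le_of_le_one_right (abs_nonneg _) h5
        _ = |(Polynomial.taylor y (P q)).coeff s| * (1 / 4) ^ s * 4 ^ s := h8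
        _ ≤ c₂ * (3 * c₁ * W * (4 * N) ^ r) * 4 ^ (2 * r) := by
          refine mul_le_mul (h4.trans (by gcongr)) h7 (by positivity) (by positivity)
        _ = A * W * N ^ r := by
          rw [hA, mul_pow, show 3 * r = r + 2 * r by ring, pow_add]; ring
    intro i
    induction i with
    | zero => intro q h1 h2 h3; exact hbase q h1 h2 (by linarith)
    | succ i ih =>
      intro q h1 h2 h3 y hy0 hy1 s hrs hs
      rcases le_or_gt (1 / 4) q with h4 | h4
      · exact hbase q h1 h2 h4 y hy0 hy1 s hrs hs
      have hq := hpos q h1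
      have h5 := ih (2 * q) (by linarith) (by linarith) (by rw [pow_succ] at h3; linarith) y hy0
        (by linarith) s hrs hs
      have h6 := hstep q h1 (by linarith) y hy0 hy1 s hrs hs
      have h7 : (2:ℝ) ^ 1 ≤ 2 ^ (s - r) := pow_le_pow_right₀ (by norm_num) (by omega)
      rw [mul_pow] at h5
      have h8 : 2 * (|(Polynomial.taylor y (P (2 * q))).coeff s| * q ^ (s - r)) ≤ A * W * N ^ r := by
        refine le_trans ?_ h5
        have : 0 ≤ |(Polynomial.taylor y (P (2 * q))).coeff s| * q ^ (s - r) := by positivity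
        nlinarith
      have h9 : |(Polynomial.taylor y (P q)).coeff s| ≤
          |(Polynomial.taylor y (P q)).coeff s - (Polynomial.taylor y (P (2 * q))).coeff s| +
            |(Polynomial.taylor y (P (2 * q))).coeff s| := by
        have := abs_sub_le ((Polynomial.taylor y (P q)).coeff s)
          ((Polynomial.taylor y (P (2 * q))).coeff s) 0
        simpa using this
      have h10 := mul_le_mul_of_nonneg_right h9 (pow_pos hq (s - r)).le
      have h11 : 8 * (c₁ * c₂) * (W * N ^ r) ≤ A * (W * N ^ r) := by gcongr
      rw [add_mul] at h10
      linarith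
  intro q h1 h2
  have hq := hpos q h1
  refine ⟨P q, (hP q h1 h2).1, fun x hx0 hx1 => ?_, fun y hy0 hy1 s hrs hs => ?_⟩
  · set D := (x - q) ^ 2 * (N / q) with hDdef
    have hD0 : 0 ≤ D := by positivity
    have hDr : D ^ r ≤ 1 + D ^ (2 * r) := by
      rw [two_mul, pow_add]
      nlinarith [sq_nonneg (D ^ r - 1)]
    have hfin : ∀ E : ℝ, 0 ≤ E → E ≤ A + 10 * 16 ^ r * (c₁ * c₂) + 2 * c₁ →
        |f x - (P q).eval x| ≤ E * W * (1 + D ^ (2 * r)) →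
        |f x - (P q).eval x| ≤ (A + 10 * 16 ^ r * (c₁ * c₂) + 2 * c₁) * W * (1 + D ^ (2 * r)) := by
      intro E _ hE h
      exact h.trans (by gcongr)
    have hA0 : 0 ≤ A := by positivity
    have h16 : 0 ≤ (16:ℝ) ^ r * (c₁ * c₂) := by positivity
    rcases lt_or_ge x (q / 2) with hxq | hxq
    · refine hfin (6 * 16 ^ r * (c₁ * c₂)) (by positivity) (by linarith) ?_
      have hb1 := one_le_pow₀ (hNq q h1) (n := r)
      have hb := one_le_pow₀ (hNq q h1) (n := 2 * r)
      have hbb : (N * q) ^ r ≤ (N * q) ^ (2 * r) := pow_le_pow_right₀ (hNq q h1) (by omega)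
      have hQ : ∀ z, 0 ≤ z → z ≤ q →
          |f z - (P (1 / N)).eval z| ≤ 2 * c₁ * W * (N * q) ^ (2 * r) := by
        intro z hz0 hz1
        refine hclose (1 / N) le_rfl (by linarith) z hz0 (by linarith) (Or.inr rfl) _ hb ?_
        rw [pow_mul]
        gcongr
        rw [show N / (1 / N) = N ^ 2 by field_simp, mul_pow, mul_comm]
        have : 0 < 1 / N := by positivity
        gcongr ?_ * ?_
        nlinarith
      have h3 := hmar (P q - P (1 / N)) ((Polynomial.natDegree_sub_le _ _).trans_lt
        (max_lt (hP q h1 h2).1 (hP (1 / N) le_rfl (by linarith)).1)) (q / 2) (q / 2)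
        (4 * c₁ * W * (N * q) ^ (2 * r)) (by linarith) (fun z hz1 hz2 => by
          have e1 := hclose q h1 h2 z (by linarith) (by linarith) (Or.inl (by linarith))
            _ hb1 (pow_le_pow_left₀ (by positivity)
              (sq_mul_div_le hN0.le hq hq le_rfl (abs_le.2 ⟨by linarith, by linarith⟩)) _)
          have e2 := hQ z (by linarith) (by linarith)
          have e3 : 2 * c₁ * W * (N * q) ^ r ≤ 2 * c₁ * W * (N * q) ^ (2 * r) := by gcongr
          rw [abs_sub_comm] at e1
          rw [Polynomial.eval_sub]
          have := abs_sub_le ((P q).eval z) (f z) ((P (1 / N)).eval z)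
          linarith) 0 (by omega) x (by rw [abs_le]; constructor <;> linarith)
      rw [pow_zero, mul_one, Polynomial.taylor_coeff_zero, Polynomial.eval_sub] at h3
      have h4 := hQ x hx0 (by linarith)
      have h5 := abs_sub_le (f x) ((P (1 / N)).eval x) ((P q).eval x)
      rw [abs_sub_comm ((P (1 / N)).eval x)] at h5
      have h6 : (N * q) ^ (2 * r) ≤ 16 ^ r * D ^ (2 * r) := by
        rw [show (16:ℝ) ^ r = 4 ^ (2 * r) by rw [pow_mul]; norm_num, ← mul_pow]
        refine pow_le_pow_left₀ (by positivity) ?_ _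
        rw [hDdef, mul_div_assoc', mul_div_assoc', le_div_iff₀ hq]
        have : q ^ 2 / 4 ≤ (x - q) ^ 2 := by nlinarith
        nlinarith
      have h7 : c₁ * W * (N * q) ^ (2 * r) ≤ c₁ * c₂ * (W * (N * q) ^ (2 * r)) := by
        rw [mul_assoc]
        refine mul_le_mul_of_nonneg_right ?_ (by positivity)
        nlinarith
      calc |f x - (P q).eval x| ≤ 6 * (c₁ * c₂) * W * (N * q) ^ (2 * r) := by linarith
        _ ≤ 6 * (c₁ * c₂) * W * (16 ^ r * (1 + D ^ (2 * r))) := by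
          gcongr
          refine h6.trans ?_
          gcongr
          linarith
        _ = _ := by ring
    rcases le_or_gt x (3 / 4) with hx34 | hx34
    · refine hfin (2 * c₁) (by positivity) (by linarith) ?_
      refine ((hP q h1 h2).2 x hx0 hx34 (Or.inl hxq)).trans ?_
      have : 0 ≤ D ^ (2 * r) := by positivity
      calc c₁ * W * (1 + D ^ r) ≤ c₁ * W * (2 * (1 + D ^ (2 * r))) := by gcongr; linarith
        _ = _ := by ring
    · refine hfin (4 * 16 ^ r * (c₁ * c₂)) (by positivity) (by linarith) ?_
      have h3 := hmidext q h1 h2 x hx0 hx1 0 (by omega)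
      rw [pow_zero, mul_one, Polynomial.taylor_coeff_zero] at h3
      have h4 : W * N ^ r ≤ c₁ * c₂ * (W * (N / q) ^ r) := by
        have : N ^ r ≤ (N / q) ^ r := by
          gcongr
          rw [le_div_iff₀ hq]; nlinarith
        calc W * N ^ r ≤ 1 * (W * (N / q) ^ r) := by rw [one_mul]; gcongr
          _ ≤ _ := by gcongr
      have h5 : (N / q) ^ r ≤ 16 ^ r * (1 + D ^ (2 * r)) := by
        calc (N / q) ^ r ≤ (16 * D) ^ r := by
              refine pow_le_pow_left₀ (by positivity) ?_ _
              rw [hDdef, ← mul_assoc]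
              refine le_mul_of_one_le_left (by positivity) ?_
              nlinarith
          _ = 16 ^ r * D ^ r := mul_pow _ _ _
          _ ≤ _ := mul_le_mul_of_nonneg_left hDr (by positivity)
      have h6 := hfS x hx0 hx1
      calc |f x - (P q).eval x| ≤ |f x| + |(P q).eval x| := abs_sub _ _
        _ ≤ 4 * (c₁ * c₂) * W * (N / q) ^ r := by linarith
        _ ≤ 4 * (c₁ * c₂) * W * (16 ^ r * (1 + D ^ (2 * r))) := by gcongr
        _ = _ := by ring
  · obtain ⟨i, hi⟩ := pow_unbounded_of_one_lt (1 / q) (one_lt_two (α := ℝ))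
    rw [div_lt_iff₀ hq] at hi
    refine (hcoef i q h1 h2 (by linarith) y hy0 hy1 s hrs hs).trans ?_
    gcongr
    have : 0 ≤ (16:ℝ) ^ r * (c₁ * c₂) := by positivity
    linarith

theorem abs_le_supAbsOn {f : ℝ → ℝ} (hf : ContinuousOn f (Set.Icc 0 1)) {x : ℝ}
    (hx : x ∈ Set.Icc (0:ℝ) 1) : |f x| ≤ supAbsOn f :=
  le_csSup (isCompact_Icc.image_of_continuousOn hf.abs).bddAbove ⟨x, hx, rfl⟩

theorem node_mem_Icc {x h : ℝ} {r k : ℕ} (hh : 0 ≤ h) (hx0 : x - r * h / 2 ∈ Set.Icc (0:ℝ) 1)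
    (hx1 : x + r * h / 2 ∈ Set.Icc (0:ℝ) 1) (hk : k ∈ Finset.range (r + 1)) :
    x + r * h / 2 - k * h ∈ Set.Icc (0:ℝ) 1 := by
  have hk' : (k:ℝ) ≤ r := by exact_mod_cast Finset.mem_range_succ_iff.1 hk
  have h1 : (k:ℝ) * h ≤ r * h := by gcongr
  have h2 : 0 ≤ (k:ℝ) * h := by positivity
  constructor <;> linarith [hx0.1, hx1.2]

theorem abs_ditzSymmDiff_le {f : ℝ → ℝ} {S : ℝ} (hS : ∀ x ∈ Set.Icc (0:ℝ) 1, |f x| ≤ S) (r : ℕ)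
    {h : ℝ} (hh : 0 ≤ h) (x : ℝ) : |ditzSymmDiff r h f x| ≤ 2 ^ r * S := by
  have hS0 : 0 ≤ S := (abs_nonneg _).trans (hS 0 ⟨le_rfl, zero_le_one⟩)
  rw [ditzSymmDiff]
  split_ifs with hx
  · calc _ ≤ ∑ k ∈ Finset.range (r + 1), (r.choose k : ℝ) * S := by
          refine (Finset.abs_sum_le_sum_abs _ _).trans (Finset.sum_le_sum fun k hk => ?_)
          rw [abs_mul, abs_mul, abs_pow, abs_neg, abs_one, one_pow, one_mul, Nat.abs_cast]
          gcongr
          exact hS _ (node_mem_Icc hh hx.1 hx.2 hk)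
      _ = 2 ^ r * S := by
          rw [← Finset.sum_mul]
          congr 1
          exact_mod_cast Nat.sum_range_choose r
  · rw [abs_zero]
    positivity

theorem abs_ditzSymmDiff_le_dtMod {f : ℝ → ℝ} (hf : ContinuousOn f (Set.Icc 0 1)) (r : ℕ)
    {h t x : ℝ} (hh : 0 < h) (ht : h ≤ t) (hx : x ∈ Set.Icc (0:ℝ) 1) :
    |ditzSymmDiff r (h * Real.sqrt (x * (1 - x))) f x| ≤ dtMod r f t := by
  refine le_csSup ⟨2 ^ r * supAbsOn f, ?_⟩ ⟨h, x, hh, ht, hx, rfl⟩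
  rintro _ ⟨h, x, hh, -, -, rfl⟩
  exact abs_ditzSymmDiff_le (fun x hx => abs_le_supAbsOn hf hx) r (by positivity) x

theorem dtMod_nonneg (r : ℕ) (f : ℝ → ℝ) (t : ℝ) : 0 ≤ dtMod r f t := by
  refine Real.sSup_nonneg ?_
  rintro _ ⟨h, x, -, -, -, rfl⟩
  exact abs_nonneg _

theorem supAbsOn_nonneg (f : ℝ → ℝ) : 0 ≤ supAbsOn f := by
  refine Real.sSup_nonneg ?_
  rintro _ ⟨x, -, rfl⟩
  exact abs_nonneg _

theorem dtMod_congr {f g : ℝ → ℝ} (hfg : Set.EqOn f g (Set.Icc 0 1)) (r : ℕ) (t : ℝ) :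
    dtMod r f t = dtMod r g t := by
  have key : ∀ h x : ℝ, 0 ≤ h → ditzSymmDiff r h f x = ditzSymmDiff r h g x := by
    intro h x hh
    rw [ditzSymmDiff, ditzSymmDiff]
    split_ifs with hx
    · exact Finset.sum_congr rfl fun k hk => by rw [hfg (node_mem_Icc hh hx.1 hx.2 hk)]
    · rfl
  rw [dtMod, dtMod]
  congr 1
  ext y
  constructor <;> rintro ⟨h, x, hh, ht, hx, rfl⟩ <;>
    exact ⟨h, x, hh, ht, hx, by rw [key _ _ (by positivity)]⟩

theorem supAbsOn_congr {f g : ℝ → ℝ} (hfg : Set.EqOn f g (Set.Icc 0 1)) :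
    supAbsOn f = supAbsOn g := by
  rw [supAbsOn, supAbsOn, Set.image_congr fun p hp => by rw [hfg hp]]

theorem bernstein'_congr {f g : ℝ → ℝ} (hfg : Set.EqOn f g (Set.Icc 0 1)) (m : ℕ) (p : ℝ) :
    bernstein' m f p = bernstein' m g p := by
  refine Finset.sum_congr rfl fun k hk => ?_
  have hk' : (k:ℝ) ≤ m := by exact_mod_cast Finset.mem_range_succ_iff.1 hk
  rw [hfg ⟨by positivity, div_le_one_of_le₀ hk' (by positivity)⟩]

theorem ditzSymmDiff_reflect (r : ℕ) (h : ℝ) (f : ℝ → ℝ) (x : ℝ) :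
    ditzSymmDiff (2 * r) h (fun y => f (1 - y)) x = ditzSymmDiff (2 * r) h f (1 - x) := by
  rw [ditzSymmDiff, ditzSymmDiff]
  refine if_congr ?_ ?_ rfl
  · simp only [Set.mem_Icc]
    constructor <;> rintro ⟨⟨h1, h2⟩, h3, h4⟩ <;> refine ⟨⟨?_, ?_⟩, ?_, ?_⟩ <;> linarith
  · rw [← Finset.sum_range_reflect]
    refine Finset.sum_congr rfl fun k hk => ?_
    have hk' := Finset.mem_range_succ_iff.1 hk
    rw [show 2 * r + 1 - 1 - k = 2 * r - k by omega, Nat.choose_symm hk', Nat.cast_sub hk']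
    congr 2
    · refine neg_one_pow_congr ?_
      rw [Nat.even_sub hk']
      simp
    · push_cast
      ring_nf

theorem dtMod_reflect (r : ℕ) (f : ℝ → ℝ) (t : ℝ) :
    dtMod (2 * r) (fun y => f (1 - y)) t = dtMod (2 * r) f t := by
  rw [dtMod, dtMod]
  congr 1
  ext y
  constructor <;> rintro ⟨h, x, hh, ht, hx, rfl⟩ <;>
    refine ⟨h, 1 - x, hh, ht, ⟨by linarith [hx.2], by linarith [hx.1]⟩, ?_⟩ <;>
    simp only [ditzSymmDiff_reflect, sub_sub_cancel, mul_comm (1 - x)]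

theorem supAbsOn_reflect (f : ℝ → ℝ) : supAbsOn (fun y => f (1 - y)) = supAbsOn f := by
  rw [supAbsOn, supAbsOn]
  congr 1
  ext y
  constructor <;> rintro ⟨x, hx, rfl⟩ <;>
    exact ⟨1 - x, ⟨by linarith [hx.2], by linarith [hx.1]⟩, by simp⟩

theorem bernstein'_reflect {m : ℕ} (hm : 0 < m) (f : ℝ → ℝ) (p : ℝ) :
    bernstein' m (fun y => f (1 - y)) p = bernstein' m f (1 - p) := by
  rw [bernstein', bernstein', ← Finset.sum_range_reflect]
  refine Finset.sum_congr rfl fun k hk => ?_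
  have hk' := Finset.mem_range_succ_iff.1 hk
  rw [show m + 1 - 1 - k = m - k by omega, Nat.choose_symm hk', Nat.sub_sub_self hk',
    Nat.cast_sub hk', sub_sub_cancel, show 1 - ((m:ℝ) - k) / m = k / m by field_simp; ring]
  ring

theorem fwdDiff_iterate_eq_ditzSymmDiff (r : ℕ) (f : ℝ → ℝ) {x v : ℝ} (hx : 0 ≤ x) (hv : 0 ≤ v)
    (hxv : x + 2 * r * v ≤ 1) :
    (fwdDiff v)^[2 * r] f x = ditzSymmDiff (2 * r) v f (x + r * v) := by
  have hrv : 0 ≤ r * v := by positivity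
  rw [ditzSymmDiff, if_pos, fwdDiff_iter_eq_sum_shift, ← Finset.sum_range_reflect]
  · refine Finset.sum_congr rfl fun k hk => ?_
    have hk' := Finset.mem_range_succ_iff.1 hk
    rw [show 2 * r + 1 - 1 - k = 2 * r - k by omega, Nat.choose_symm hk', Nat.sub_sub_self hk']
    rw [zsmul_eq_mul, nsmul_eq_mul, Nat.cast_sub hk']
    push_cast
    congr 2
    ring
  · push_cast
    constructor <;> constructor <;> linarith

theorem diffBound_dtMod {f : ℝ → ℝ} (hf : ContinuousOn f (Set.Icc 0 1)) (r : ℕ) {n : ℝ}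
    (hn : 0 < n) : DiffBound r f (2 * n) (dtMod (2 * r) f (1 / Real.sqrt n)) := by
  intro x v hx hv hxv hv2
  have hrv : 0 ≤ r * v := by positivity
  rw [fwdDiff_iterate_eq_ditzSymmDiff r f hx hv.le (by linarith)]
  set u := x + r * v with hu
  have hu8 : u ≤ 7 / 8 := by linarith
  have hu0 : 0 < u := by
    rcases (add_nonneg hx hrv).eq_or_lt with h | h
    · rw [hu, ← h, zero_div] at hv2
      exact absurd hv2 (not_le.2 (by positivity))
    · exact h
  have hφ : 0 < Real.sqrt (u * (1 - u)) := Real.sqrt_pos.2 (mul_pos hu0 (by linarith))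
  have key := abs_ditzSymmDiff_le_dtMod hf (2 * r) (h := v / Real.sqrt (u * (1 - u)))
    (t := 1 / Real.sqrt n) (x := u) (by positivity) ?_ ⟨hu0.le, by linarith⟩
  · rwa [div_mul_cancel₀ _ hφ.ne'] at key
  · rw [div_le_div_iff₀ hφ (Real.sqrt_pos.2 hn), one_mul]
    refine Real.le_sqrt_of_sq_le ?_
    rw [mul_pow, Real.sq_sqrt hn.le]
    rw [le_div_iff₀ (by positivity)] at hv2
    nlinarith

theorem bernstein'_mono {f g : ℝ → ℝ} (m : ℕ) {p : ℝ} (hp0 : 0 ≤ p) (hp1 : p ≤ 1)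
    (h : ∀ x ∈ Set.Icc (0:ℝ) 1, f x ≤ g x) : bernstein' m f p ≤ bernstein' m g p := by
  rw [bernstein'_eq, bernstein'_eq]
  refine Finset.sum_le_sum fun k hk => mul_le_mul_of_nonneg_left (h _ ?_)
    (binomWeight_nonneg m k hp0 hp1)
  have hk' : (k:ℝ) ≤ m := by exact_mod_cast Finset.mem_range_succ_iff.1 hk
  exact ⟨by positivity, div_le_one_of_le₀ hk' (by positivity)⟩

theorem abs_bernstein'_le {f g : ℝ → ℝ} (m : ℕ) {p : ℝ} (hp0 : 0 ≤ p) (hp1 : p ≤ 1)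
    (h : ∀ x ∈ Set.Icc (0:ℝ) 1, |f x| ≤ g x) : |bernstein' m f p| ≤ bernstein' m g p := by
  refine le_trans ?_ (bernstein'_mono m hp0 hp1 h)
  rw [bernstein'_eq, bernstein'_eq]
  refine (Finset.abs_sum_le_sum_abs _ _).trans_eq (Finset.sum_congr rfl fun k _ => ?_)
  rw [abs_mul, abs_of_nonneg (binomWeight_nonneg m k hp0 hp1)]

theorem bernstein'_const_add_mul (m : ℕ) (a b : ℝ) (f : ℝ → ℝ) (p : ℝ) :
    bernstein' m (fun x => a + b * f x) p = a + b * bernstein' m f p := by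
  simp only [bernstein'_eq, mul_add, Finset.sum_add_distrib, ← Finset.sum_mul, sum_binomWeight,
    one_mul, Finset.mul_sum]
  congr 1
  exact Finset.sum_congr rfl fun k _ => by ring

theorem exists_bernstein'_growth_bound (r : ℕ) (K : ℝ) : ∃ c : ℝ, 0 < c ∧
    ∀ (m : ℕ) (N p q : ℝ), 0 < m → 0 ≤ p → p ≤ 1 → p ≤ q → (m:ℝ) ≤ N → N ≤ K * m → 1 ≤ N * q →
      0 < q → (p - q) ^ 2 * (N / q) ≤ 1 →
      bernstein' m (fun x => 1 + ((x - q) ^ 2 * (N / q)) ^ (2 * r)) p ≤ c := by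
  obtain ⟨c, hc, hM⟩ := exists_binomMoment_even_bound (2 * r)
  set D : ℝ := 2 ^ (2 * r) * 2 ^ (2 * r - 1) with hD
  have hK4 : 0 ≤ K ^ (2 * (2 * r)) := (even_two_mul _).pow_nonneg K
  refine ⟨1 + D + D * (c * K ^ (2 * (2 * r))), by positivity, ?_⟩
  intro m N p q hm hp0 hp1 hpq hmN hNK hNq hq ht
  have hm' : (0:ℝ) < m := by exact_mod_cast hm
  have hN0 : 0 < N := hm'.trans_le hmN
  have hpt : ∀ x ∈ Set.Icc (0:ℝ) 1, 1 + ((x - q) ^ 2 * (N / q)) ^ (2 * r) ≤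
      (1 + D) + D * (N / q) ^ (2 * r) * (x - p) ^ (2 * (2 * r)) := by
    intro x _
    set a := (x - p) ^ 2 * (N / q) with ha
    have ha0 : 0 ≤ a := by positivity
    have h1 : (x - q) ^ 2 * (N / q) ≤ 2 * (a + 1) := by
      have : (x - q) ^ 2 ≤ 2 * ((x - p) ^ 2 + (p - q) ^ 2) := by
        nlinarith [sq_nonneg (x - p - (p - q))]
      have := mul_le_mul_of_nonneg_right this (show 0 ≤ N / q by positivity)
      linarith
    calc 1 + ((x - q) ^ 2 * (N / q)) ^ (2 * r) ≤ 1 + (2 * (a + 1)) ^ (2 * r) := by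
          linarith [pow_le_pow_left₀ (by positivity) h1 (2 * r)]
      _ ≤ 1 + 2 ^ (2 * r) * (2 ^ (2 * r - 1) * (a ^ (2 * r) + 1 ^ (2 * r))) := by
          rw [mul_pow]
          linarith [mul_le_mul_of_nonneg_left (add_pow_le ha0 zero_le_one (2 * r))
            (show (0:ℝ) ≤ 2 ^ (2 * r) by positivity)]
      _ = _ := by
          rw [ha, hD, mul_pow, one_pow, pow_mul (x - p)]
          ring
  refine (bernstein'_mono m hp0 hp1 hpt).trans ?_
  rw [bernstein'_const_add_mul, bernstein'_sub_pow hm]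
  have h2 := hM m N p q hp0 hp1 hpq hmN hNq
  have h3 : (N / q) ^ (2 * r) * (binomMoment m (2 * (2 * r)) p / m ^ (2 * (2 * r))) ≤
      c * K ^ (2 * (2 * r)) := by
    calc _ ≤ (N / q) ^ (2 * r) * (c * (N * q) ^ (2 * r) / m ^ (2 * (2 * r))) := by gcongr
      _ = c * (N / m) ^ (2 * (2 * r)) := by
        rw [div_pow, mul_pow, div_pow, two_mul (2 * r), pow_add N]
        field_simp
      _ ≤ _ := by
        gcongr
        rwa [div_le_iff₀ hm']
  rw [mul_assoc]
  have hD0 : 0 ≤ D := by positivity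
  gcongr

theorem bernstein'_sub (m : ℕ) (f g : ℝ → ℝ) (p : ℝ) :
    bernstein' m (fun x => f x - g x) p = bernstein' m f p - bernstein' m g p := by
  simp only [bernstein', mul_sub, Finset.sum_sub_distrib]

theorem exists_jackknife_half_bound (r : ℕ) (hr : 1 ≤ r) (K C : ℝ) (hK : 1 ≤ K) (hC : 0 < C) :
    ∃ c : ℝ, 0 < c ∧ ∀ n : ℕ, 1 ≤ n → ∀ ns : Fin r → ℕ, Function.Injective ns →
      (∀ i, (n:ℝ) / K ≤ ns i) → (∀ i, ns i ≤ n) → ∑ i, |jackCoeff ns i| ≤ C →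
      ∀ f : ℝ → ℝ, Continuous f → ∀ p, 0 ≤ p → p ≤ 1 / 2 →
        |(∑ i, jackCoeff ns i * bernstein' (ns i) f p) - f p| ≤
          c * (dtMod (2 * r) f (1 / Real.sqrt n) + supAbsOn f / (n:ℝ) ^ r) := by
  obtain ⟨c₁, hc₁, happrox⟩ := exists_global_approx r hr
  obtain ⟨c₂, hc₂, hgrowth⟩ := exists_bernstein'_growth_bound r (2 * K)
  obtain ⟨c₃, hc₃, hpoly⟩ := exists_jackknife_polynomial_bound r (2 * K) C (by linarith) hC
  refine ⟨C * (c₁ * c₂) + c₃ * c₁ + 2 * c₁, by positivity, ?_⟩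
  intro n hn ns hinj hlow hup hsum f hf p hp0 hp1
  have hn1 : (1:ℝ) ≤ n := by exact_mod_cast hn
  have hn0 : (0:ℝ) < n := by linarith
  set N : ℝ := 2 * n with hN
  set W := dtMod (2 * r) f (1 / Real.sqrt n) + supAbsOn f / (n:ℝ) ^ r with hW
  have hω0 := dtMod_nonneg (2 * r) f (1 / Real.sqrt n)
  have hS0 := supAbsOn_nonneg f
  have hSn : 0 ≤ supAbsOn f / (n:ℝ) ^ r := by positivity
  have hW0 : 0 ≤ W := add_nonneg hω0 hSn
  have hDB : DiffBound r f N W := fun x v h1 h2 h3 h4 =>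
    (diffBound_dtMod hf.continuousOn r hn0 x v h1 h2 h3 h4).trans (by linarith)
  have hfS : ∀ x, 0 ≤ x → x ≤ 1 → |f x| ≤ W * N ^ r := by
    intro x hx0 hx1
    calc |f x| ≤ supAbsOn f := abs_le_supAbsOn hf.continuousOn ⟨hx0, hx1⟩
      _ = supAbsOn f / (n:ℝ) ^ r * n ^ r := by field_simp
      _ ≤ W * N ^ r := by
        gcongr <;> linarith
  set q := max p (1 / N) with hq
  have hN0 : 0 < N := by positivity
  have hqN : 1 / N ≤ q := le_max_right _ _
  have hpq : p ≤ q := le_max_left _ _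
  have hq0 : 0 < q := lt_of_lt_of_le (by positivity) hqN
  have hq2 : q ≤ 1 / 2 := max_le hp1 (one_div_le_one_div_of_le (by norm_num) (by linarith))
  have hNq : 1 ≤ N * q := by
    rw [div_le_iff₀ hN0] at hqN
    linarith
  have ht : (p - q) ^ 2 * (N / q) ≤ 1 := by
    rcases le_total (1 / N) p with h | h
    · rw [hq, max_eq_left h]
      norm_num
    · have hq' : q = 1 / N := max_eq_right h
      have h1 : (p - q) ^ 2 ≤ (1 / N) ^ 2 := by
        rw [← sq_abs]
        gcongr
        rw [abs_le]
        constructor <;> linarith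
      calc (p - q) ^ 2 * (N / q) ≤ (1 / N) ^ 2 * (N / q) := by gcongr
        _ = 1 := by
          rw [hq']
          field_simp
  have hns : ∀ i, 0 < ns i := fun i => by
    have : (0:ℝ) < ns i := lt_of_lt_of_le (by positivity) (hlow i)
    exact_mod_cast this
  have hNns : ∀ i, N ≤ 2 * K * ns i := fun i => by
    have := hlow i
    rw [div_le_iff₀ (by positivity)] at this
    linarith
  obtain ⟨P, hPdeg, hPf, hPc⟩ := happrox f N W hf (by linarith) hW0 hDB hfS q hqN hq2
  have h1 : ∀ i, |bernstein' (ns i) (fun x => f x - P.eval x) p| ≤ c₁ * W * c₂ := by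
    intro i
    refine (abs_bernstein'_le (ns i) hp0 (by linarith) fun x hx => hPf x hx.1 hx.2).trans ?_
    have := bernstein'_const_add_mul (ns i) 0 (c₁ * W)
      (fun x => 1 + ((x - q) ^ 2 * (N / q)) ^ (2 * r)) p
    simp only [zero_add] at this
    rw [this]
    have hnsn : (ns i : ℝ) ≤ n := by exact_mod_cast hup i
    have := hgrowth (ns i) N p q (hns i) hp0 (by linarith) hpq (by linarith) (hNns i) hNq hq0 ht
    gcongr
  have h2 := hpoly ns N p q (c₁ * W) P hinj hns hNns hsum hN0 hp0 hpq (by linarith) hNq (by omega)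
    hPdeg (by positivity) (hPc p hp0 hpq)
  have h3 : |P.eval p - f p| ≤ 2 * c₁ * W := by
    rw [abs_sub_comm]
    refine (hPf p hp0 (by linarith)).trans ?_
    have : ((p - q) ^ 2 * (N / q)) ^ (2 * r) ≤ 1 := pow_le_one₀ (by positivity) ht
    calc _ ≤ c₁ * W * (1 + 1) := by gcongr
      _ = _ := by ring
  have h4 : |∑ i, jackCoeff ns i * bernstein' (ns i) (fun x => f x - P.eval x) p| ≤
      C * (c₁ * W * c₂) := by
    calc _ ≤ ∑ i, |jackCoeff ns i| * (c₁ * W * c₂) := by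
          refine (Finset.abs_sum_le_sum_abs _ _).trans (Finset.sum_le_sum fun i _ => ?_)
          rw [abs_mul]
          gcongr
          exact h1 i
      _ ≤ _ := by
          rw [← Finset.sum_mul]
          gcongr
  have h5 : (∑ i, jackCoeff ns i * bernstein' (ns i) f p) - f p =
      ∑ i, jackCoeff ns i * bernstein' (ns i) (fun x => f x - P.eval x) p +
        (∑ i, jackCoeff ns i * bernstein' (ns i) (fun x => P.eval x) p - P.eval p) +
        (P.eval p - f p) := by
    simp only [bernstein'_sub, mul_sub, Finset.sum_sub_distrib]
    ring
  rw [h5]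
  refine (abs_add_three _ _ _).trans ?_
  linarith

/-- bias of a bounded-coefficients `r`-jackknife is
`O(ω_φ^{2r}(f, 1/√n) + n^{-r} ‖f‖)`, uniformly over admissible sample sizes and `f ∈ C[0,1]`. -/
theorem jackknife_bias_upper (r : ℕ) (hr : 1 ≤ r) (K C : ℝ) (hK : 1 ≤ K) (hC : 0 < C) :
    ∃ c > 0, ∀ n : ℕ, 1 ≤ n → ∀ ns : Fin r → ℕ,
      StrictMono ns →
      (n : ℝ) / K ≤ (ns ⟨0, by omega⟩ : ℝ) →
      ns ⟨r - 1, by omega⟩ ≤ n →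
      (∑ i, |jackCoeff ns i|) ≤ C →
      ∀ f : ℝ → ℝ, ContinuousOn f (Set.Icc 0 1) →
        jackBias ns f ≤
          c * (dtMod (2 * r) f (1 / Real.sqrt n) + supAbsOn f / (n : ℝ) ^ r) := by
  obtain ⟨c, hc, hbound⟩ := exists_jackknife_half_bound r hr K C hK hC
  refine ⟨c, hc, fun n hn ns hmono hlow hup hsum f hf => ?_⟩
  have hlow' : ∀ i, (n:ℝ) / K ≤ ns i := fun i => by
    refine hlow.trans ?_
    exact_mod_cast hmono.monotone (show (⟨0, by omega⟩ : Fin r) ≤ i from Nat.zero_le _)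
  have hup' : ∀ i, ns i ≤ n := fun i =>
    (hmono.monotone (show i ≤ (⟨r - 1, by omega⟩ : Fin r) from Nat.le_sub_one_of_lt i.2)).trans hup
  have hns : ∀ i, 0 < ns i := fun i => by
    have hn0 : (0:ℝ) < n := by exact_mod_cast hn
    have : (0:ℝ) < ns i := lt_of_lt_of_le (by positivity) (hlow' i)
    exact_mod_cast this
  set g : ℝ → ℝ := Set.IccExtend zero_le_one ((Set.Icc (0:ℝ) 1).domRestrict f) with hg
  have hgc : Continuous g := (continuousOn_iff_continuous_domRestrict.1 hf).Icc_extend'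
  have hfg : Set.EqOn f g (Set.Icc 0 1) := fun x hx => by
    rw [hg, Set.IccExtend_of_mem _ _ hx, Set.domRestrict_apply]
  refine csSup_le ((Set.nonempty_Icc.2 zero_le_one).image _) ?_
  rintro _ ⟨p, hp, rfl⟩
  simp only [dtMod_congr hfg, supAbsOn_congr hfg, bernstein'_congr hfg, hfg hp]
  rcases le_total p (1 / 2) with hp2 | hp2
  · exact hbound n hn ns hmono.injective hlow' hup' hsum g hgc p hp.1 hp2
  · have h := hbound n hn ns hmono.injective hlow' hup' hsum (fun y => g (1 - y))
      (hgc.comp (continuous_const.sub continuous_id)) (1 - p) (by linarith [hp.2]) (by linarith)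
    simpa only [dtMod_reflect, supAbsOn_reflect, bernstein'_reflect (hns _), sub_sub_cancel] using h
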